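/- Let N ∈ [1,∞) and let (X,d,m) be a geodesic metric measure space, with m locally finite, in which the Rényi entropy functional E_N is strongly displacement convex. Then for every continuous function u : X → ℝ, every upper gradient g of u, every x ∈ X and every r > 0 one has the weak local Poincaré inequality ⨍_{B(x,r)} |u − ⟨u⟩_{B(x,r)}| dm ≤ 2^{N+2} r ⨍_{B(x,2r)} g dm, where ⨍ denotes the average integral. -/

import Mathlib

open MeasureTheory Metric Set Filter ProbabilityTheory
open scoped ENNReal NNReal Topology ProbabilityTheory

noncomputable section

variable {X : Type*} [MetricSpace X] [MeasurableSpace X]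

/-- A constant-speed geodesic parametrized on `[0,1]`:
`d(γ(s),γ(t)) = |s - t| · d(γ(0),γ(1))` for all `s,t ∈ [0,1]`. -/
def IsGeodesicMap (γ : ℝ → X) : Prop :=
  ∀ s ∈ Set.Icc (0:ℝ) 1, ∀ t ∈ Set.Icc (0:ℝ) 1,
    dist (γ s) (γ t) = |s - t| * dist (γ 0) (γ 1)

/-- A geodesic metric space: any two points are joined by a geodesic. -/
def IsGeodesicSpace (X : Type*) [MetricSpace X] : Prop :=
  ∀ x y : X, ∃ γ : ℝ → X, IsGeodesicMap γ ∧ γ 0 = x ∧ γ 1 = y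

/-- The squared Wasserstein cost: infimum over couplings of `∫ d(x,y)² dσ`. -/
def W2sq (μ ν : Measure X) : ℝ≥0∞ :=
  ⨅ (σ : Measure (X × X)) (_ : σ.map Prod.fst = μ ∧ σ.map Prod.snd = ν),
    ∫⁻ p, edist p.1 p.2 ^ 2 ∂σ

/-- The Wasserstein distance `W₂`, with values in `[0,∞]`. -/
def W2 (μ ν : Measure X) : ℝ≥0∞ := W2sq μ ν ^ (1/2 : ℝ)

/-- A geodesic in the Wasserstein space `(P(X), W₂)`, parametrized on `[0,1]`. -/
def IsW2Geodesic (Γ : ℝ → Measure X) : Prop :=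
  (∀ t ∈ Set.Icc (0:ℝ) 1, IsProbabilityMeasure (Γ t)) ∧
  W2 (Γ 0) (Γ 1) ≠ ∞ ∧
  ∀ s ∈ Set.Icc (0:ℝ) 1, ∀ t ∈ Set.Icc (0:ℝ) 1,
    W2 (Γ s) (Γ t) = ENNReal.ofReal |s - t| * W2 (Γ 0) (Γ 1)

/-- The evaluation map `e_t : γ ↦ γ(t)`. -/
def evalGeo (t : ℝ) : (ℝ → X) → X := fun γ => γ t

/-- `π ∈ GeoOpt(μ,ν)`: a probability measure on geodesics of `X` such that
`t ↦ (e_t)_# π` is a geodesic in `(P(X), W₂)` from `μ` to `ν`. -/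
def IsGeoOpt (μ ν : Measure X) (π : Measure (ℝ → X)) : Prop :=
  IsProbabilityMeasure π ∧ (∀ᵐ γ ∂π, IsGeodesicMap γ) ∧
  π.map (evalGeo 0) = μ ∧ π.map (evalGeo 1) = ν ∧
  IsW2Geodesic (fun t => π.map (evalGeo t))

/-- `ρ ↦ ρ^(1-1/N)` with the convention `0^(1-1/N) = 0` (also for `N = 1`). -/
def renyiIntegrand (N : ℝ) (ρ : ℝ≥0∞) : ℝ≥0∞ :=
  haveI := Classical.dec (ρ = 0)
  if ρ = 0 then 0 else ρ ^ (1 - 1/N)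

/-- The Rényi entropy functional `E_N(μ) = -∫ ρ^(1-1/N) dm`, where `ρ` is the density of
the absolutely continuous part of `μ` with respect to `m`. -/
def renyiEntropy (N : ℝ) (m μ : Measure X) : EReal :=
  - ((∫⁻ x, renyiIntegrand N (μ.rnDeriv m x) ∂m : ℝ≥0∞) : EReal)

/-- The Shannon entropy functional `E_∞(μ) = ∫ ρ log ρ dm` if `μ = ρ m ≪ m`
(defined as the difference of the integrals of the positive and negative parts),
and `+∞` otherwise. -/
def shannonEntropy (m μ : Measure X) : EReal :=
  haveI := Classical.dec (μ ≪ m)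
  if μ ≪ m then
    ((∫⁻ x, ENNReal.ofReal ((μ.rnDeriv m x).toReal * Real.log (μ.rnDeriv m x).toReal) ∂m :
        ℝ≥0∞) : EReal)
      - ((∫⁻ x, ENNReal.ofReal (-((μ.rnDeriv m x).toReal *
          Real.log (μ.rnDeriv m x).toReal)) ∂m : ℝ≥0∞) : EReal)
  else (⊤ : EReal)

/-- A functional on `P(X)` is strongly displacement convex if it is convex along every
geodesic of the Wasserstein space. -/
def StronglyDisplacementConvex (E : Measure X → EReal) : Prop :=
  ∀ Γ : ℝ → Measure X, IsW2Geodesic Γ → ∀ s ∈ Set.Icc (0:ℝ) 1,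
    E (Γ s) ≤ ((1 - s : ℝ) : EReal) * E (Γ 0) + ((s : ℝ) : EReal) * E (Γ 1)

/-- The displacement convexity class `DC_∞`. -/
def MemDCinf (F : ℝ → ℝ) : Prop :=
  ContinuousOn F (Set.Ici 0) ∧ ConvexOn ℝ (Set.Ici 0) F ∧ F 0 = 0 ∧
  ConvexOn ℝ Set.univ (fun l : ℝ => Real.exp l * F (Real.exp (-l)))

/-- The displacement convexity class `DC_N`, `N ∈ [1,∞)`. -/
def MemDCN (N : ℝ) (F : ℝ → ℝ) : Prop :=
  ContinuousOn F (Set.Ici 0) ∧ ConvexOn ℝ (Set.Ici 0) F ∧ F 0 = 0 ∧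
  ConvexOn ℝ (Set.Ioi 0) (fun l : ℝ => l ^ N * F (l ^ (-N)))

/-- `F′(∞) = lim_{r → ∞} F(r)/r` (as an extended real number). -/
def derivAtInfty (F : ℝ → ℝ) : EReal :=
  Filter.limsup (fun r : ℝ => ((F r / r : ℝ) : EReal)) Filter.atTop

/-- The integral functional `𝔉(μ) = ∫ F(ρ) dm + F′(∞) μ^⊥(X)` associated to `F`,
where `μ = ρ m + μ^⊥` is the Lebesgue decomposition of `μ` w.r.t. `m`. -/
def entFunctional (F : ℝ → ℝ) (m μ : Measure X) : EReal :=
  ((∫ x, F ((μ.rnDeriv m x).toReal) ∂m : ℝ) : EReal)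
    + derivAtInfty F * ((μ.singularPart m Set.univ : ℝ≥0∞) : EReal)

/-- Distortion coefficients `β_t(x,y)` for `N = ∞`. -/
def betaInf (K : ℝ) (t : ℝ) (x y : X) : ℝ :=
  Real.exp (K * (1 - t ^ 2) * dist x y ^ 2 / 6)

/-- Distortion coefficients `β_t(x,y)` for `N ∈ [1,∞)` and `K ≤ 0`. -/
def betaFin (K N : ℝ) (t : ℝ) (x y : X) : ℝ :=
  haveI := Classical.dec (K = 0 ∨ N = 1)
  if K = 0 ∨ N = 1 then 1
  else (Real.sinh (t * (Real.sqrt (|K| / (N - 1)) * dist x y)) /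
       (t * Real.sinh (Real.sqrt (|K| / (N - 1)) * dist x y))) ^ (N - 1)

/-- The joint law of the endpoints `(γ(0), γ(1))` under `π`. -/
def endpointLaw (π : Measure (ℝ → X)) : Measure (X × X) :=
  π.map (fun γ => (γ 0, γ 1))

/-- The curvature-dimension condition `CD(K,∞)` (for `K ≤ 0`). -/
def IsCDinf (K : ℝ) (m : Measure X) : Prop :=
  ∀ μ₀ μ₁ : Measure X, IsProbabilityMeasure μ₀ → IsProbabilityMeasure μ₁ →
    W2 μ₀ μ₁ ≠ ∞ →
    ∃ π : Measure (ℝ → X), IsGeoOpt μ₀ μ₁ π ∧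
      ∃ κ₀ κ₁ : Kernel X X, IsMarkovKernel κ₀ ∧ IsMarkovKernel κ₁ ∧
        μ₀ ⊗ₘ κ₀ = endpointLaw π ∧
        μ₁ ⊗ₘ κ₁ = (endpointLaw π).map Prod.swap ∧
        ∀ F : ℝ → ℝ, MemDCinf F → ∀ t ∈ Set.Icc (0:ℝ) 1,
          entFunctional F m (π.map (evalGeo t)) ≤
            ((1 - t : ℝ) : EReal) *
              ((∫ x₀, ∫ x₁, betaInf K (1 - t) x₀ x₁ *
                  F ((μ₀.rnDeriv m x₀).toReal / betaInf K (1 - t) x₀ x₁) ∂(κ₀ x₀) ∂m : ℝ) : EReal)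
            + ((t : ℝ) : EReal) *
              ((∫ x₁, ∫ x₀, betaInf K t x₀ x₁ *
                  F ((μ₁.rnDeriv m x₁).toReal / betaInf K t x₀ x₁) ∂(κ₁ x₁) ∂m : ℝ) : EReal)
            + derivAtInfty F *
              ((ENNReal.ofReal (1 - t) * μ₀.singularPart m Set.univ
                + ENNReal.ofReal t * μ₁.singularPart m Set.univ : ℝ≥0∞) : EReal)

/-- The curvature-dimension condition `CD(K,N)` for `K ≤ 0`, `N ∈ [1,∞)`. -/
def IsCDfin (K N : ℝ) (m : Measure X) : Prop :=
  ∀ μ₀ μ₁ : Measure X, IsProbabilityMeasure μ₀ → IsProbabilityMeasure μ₁ →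
    W2 μ₀ μ₁ ≠ ∞ →
    ∃ π : Measure (ℝ → X), IsGeoOpt μ₀ μ₁ π ∧
      ∃ κ₀ κ₁ : Kernel X X, IsMarkovKernel κ₀ ∧ IsMarkovKernel κ₁ ∧
        μ₀ ⊗ₘ κ₀ = endpointLaw π ∧
        μ₁ ⊗ₘ κ₁ = (endpointLaw π).map Prod.swap ∧
        ∀ F : ℝ → ℝ, MemDCN N F → ∀ t ∈ Set.Icc (0:ℝ) 1,
          entFunctional F m (π.map (evalGeo t)) ≤
            ((1 - t : ℝ) : EReal) *
              ((∫ x₀, ∫ x₁, betaFin K N (1 - t) x₀ x₁ *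
                  F ((μ₀.rnDeriv m x₀).toReal / betaFin K N (1 - t) x₀ x₁) ∂(κ₀ x₀) ∂m : ℝ) : EReal)
            + ((t : ℝ) : EReal) *
              ((∫ x₁, ∫ x₀, betaFin K N t x₀ x₁ *
                  F ((μ₁.rnDeriv m x₁).toReal / betaFin K N t x₀ x₁) ∂(κ₁ x₁) ∂m : ℝ) : EReal)
            + derivAtInfty F *
              ((ENNReal.ofReal (1 - t) * μ₀.singularPart m Set.univ
                + ENNReal.ofReal t * μ₁.singularPart m Set.univ : ℝ≥0∞) : EReal)

/-- The support of a measure on a metric space. -/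
def msupport (μ : Measure X) : Set X := {x : X | ∀ ε > 0, 0 < μ (Metric.ball x ε)}

/-- `g` is an upper gradient of `u`: for every curve `γ : [0,1] → X` which is Lipschitz with
constant `l` (in particular of length at most `l`),
`|u(γ(1)) - u(γ(0))| ≤ l ∫₀¹ g(γ(t)) dt`. -/
def IsUpperGradient (u : X → ℝ) (g : X → ℝ≥0∞) : Prop :=
  Measurable g ∧
  ∀ (γ : ℝ → X) (l : ℝ≥0), LipschitzOnWith l γ (Set.Icc 0 1) →
    ENNReal.ofReal |u (γ 1) - u (γ 0)| ≤ (l : ℝ≥0∞) * ∫⁻ t in Set.Icc (0:ℝ) 1, g (γ t)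

/-- The evolution variational inequality (E.V.I.) condition for the entropy functional `E`:
from every absolutely continuous probability measure there starts a curve `(μ_t)_{t ≥ 0}` with
`limsup_{h ↓ 0} (1/2h)(W₂²(ν,μ_{t+h}) - W₂²(ν,μ_t)) ≤ E(ν) - E(μ_t)` for all `t ≥ 0` and all
absolutely continuous probability measures `ν`. -/
def EVIGradientFlow (E : Measure X → EReal) (m : Measure X) : Prop :=
  ∀ μ₀ : Measure X, IsProbabilityMeasure μ₀ → μ₀ ≪ m →
    ∃ μ : ℝ → Measure X, μ 0 = μ₀ ∧ (∀ t : ℝ, 0 ≤ t → IsProbabilityMeasure (μ t)) ∧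
      ∀ t : ℝ, 0 ≤ t → ∀ ν : Measure X, IsProbabilityMeasure ν → ν ≪ m →
        Filter.limsup (fun h : ℝ =>
            (((1 / (2 * h)) * ((W2sq ν (μ (t + h))).toReal - (W2sq ν (μ t)).toReal) : ℝ) : EReal))
          (nhdsWithin 0 (Set.Ioi 0)) ≤ E ν - E (μ t)

end

/-!
Strong displacement convexity of `E_N` controls the intermediate laws of an optimal plan `P` on
geodesics. If both endpoint laws have density at most `c`, conditioning `P` on the event that the
geodesic is in `E` at time `t` again gives an optimal plan, with endpoint densities at most
`c / P(γ_t ∈ E)`; convexity bounds its Rényi entropy at time `t`, and Hölder's inequality compares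
that entropy with `m E`. Hence the law at time `t` has density at most `c` as well. Contracting a
ball towards a small ball with the same centre gives, by the same comparison, the Bishop–Gromov
type doubling bound `m (B(x, 2r)) ≤ 2 ^ N m (B(x, r))`.

Let `B = B(x, r)` and suppose that `m ({a < u} ∩ B) ≤ m ({u ≤ a} ∩ B)`. Transport the uniform
distribution on the first set to the one on the second along geodesics, which stay in `B(x, 2r)`,
and integrate the upper gradient inequality: the density bound gives
`∫_B (u - a)⁺ ≤ 2r ∫_{B(x, 2r)} g`. For `a` the mean of `u` on `B`, this or its analogue for `-u`
applies, and `(u - a)⁺` and `(u - a)⁻` have the same integral, so that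
`∫_B |u - a| ≤ 4r ∫_{B(x, 2r)} g`. Doubling turns the integrals into averages.
-/

section Separability

variable {X : Type*} [MetricSpace X]

lemma IsGeodesicMap.lipschitzOnWith {γ : ℝ → X} (hγ : IsGeodesicMap γ) :
    LipschitzOnWith (nndist (γ 0) (γ 1)) γ (Icc 0 1) :=
  LipschitzOnWith.of_dist_le_mul fun s hs t ht => by
    rw [hγ s hs t ht, Real.dist_eq, coe_nndist, mul_comm]

lemma IsGeodesicSpace.preconnectedSpace (hgeo : IsGeodesicSpace X) : PreconnectedSpace X := by
  refine ⟨isPreconnected_of_forall_pair fun x _ y _ => ?_⟩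
  obtain ⟨γ, hγ, rfl, rfl⟩ := hgeo x y
  exact ⟨γ '' Icc 0 1, subset_univ _, mem_image_of_mem γ (by simp), mem_image_of_mem γ (by simp),
    isPreconnected_Icc.image γ hγ.lipschitzOnWith.continuousOn⟩

lemma countable_of_isSeparated_of_measure_ne_top [MeasurableSpace X] [BorelSpace X]
    {m : Measure X} (hpos : ∀ x, ∀ ε > 0, 0 < m (ball x ε)) {U S : Set X} (hU : IsOpen U)
    (hmU : m U ≠ ∞) (hSU : S ⊆ U) {ε : ℝ≥0} (hε : 0 < ε) (hS : IsSeparated ε S) :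
    S.Countable := by
  have : IsFiniteMeasure (m.restrict U) := ⟨by simpa using hmU.lt_top⟩
  have hdisj : Pairwise (Function.onFun Disjoint fun x : S => ball (x : X) (ε / 2)) := by
    intro x y hxy
    apply ball_disjoint_ball
    have h : (ε : ℝ≥0∞) < edist (x : X) y := hS x.2 y.2 (Subtype.coe_injective.ne hxy)
    rw [edist_nndist, ENNReal.coe_lt_coe, ← NNReal.coe_lt_coe, coe_nndist] at h
    linarith
  have hcount := Measure.countable_meas_pos_of_disjoint_iUnion (μ := m.restrict U)
    (fun x : S => measurableSet_ball) hdisj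
  refine Set.countable_coe_iff.1 (Set.countable_univ_iff.1 (hcount.mono fun x _ => ?_))
  obtain ⟨δ, hδ, hδU⟩ := Metric.isOpen_iff.1 hU x (hSU x.2)
  rw [mem_ofPred_eq, Measure.restrict_apply measurableSet_ball]
  refine (hpos x (min δ (ε / 2)) (lt_min hδ (half_pos hε))).trans_le (measure_mono ?_)
  exact subset_inter (ball_subset_ball (min_le_right _ _))
    ((ball_subset_ball (min_le_left _ _)).trans hδU)

lemma isSeparable_of_isOpen_of_measure_ne_top [MeasurableSpace X] [BorelSpace X]
    {m : Measure X} (hpos : ∀ x, ∀ ε > 0, 0 < m (ball x ε)) {U : Set X} (hU : IsOpen U)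
    (hmU : m U ≠ ∞) : TopologicalSpace.IsSeparable U := by
  suffices ∃ D ⊆ U, D.Countable ∧ U ⊆ closure D from
    let ⟨D, _, hD, hUD⟩ := this; ⟨D, hD, hUD⟩
  refine EMetric.subset_countable_closure_of_almost_dense_set U fun ε hε => ?_
  obtain ⟨δ, hδ, hδε⟩ := ENNReal.lt_iff_exists_nnreal_btwn.1 hε
  obtain ⟨S, hS⟩ := zorn_subset {S : Set X | S ⊆ U ∧ IsSeparated δ S} fun c hc hchain =>
    ⟨⋃₀ c, ⟨sUnion_subset fun s hs => (hc hs).1,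
      (pairwise_sUnion hchain.directedOn).2 fun s hs => (hc hs).2⟩,
      fun s hs => subset_sUnion_of_mem hs⟩
  refine ⟨S, countable_of_isSeparated_of_measure_ne_top hpos hU hmU hS.prop.1
    (ENNReal.coe_pos.1 hδ) hS.prop.2, ?_⟩
  exact (isCover_iff_subset_iUnion_closedEBall.1 (IsCover.of_maximal_isSeparated hS)).trans
    (iUnion₂_mono fun x _ => closedEBall_subset_closedEBall hδε.le)

/-- The union of the separable balls with rational radius centred in `D`: one step of the
exhaustion of a connected, locally separable space by separable sets. -/
def separableBallUnion (D : Set X) : Set X :=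
  ⋃ d ∈ D, ⋃ q ∈ {q : ℚ | TopologicalSpace.IsSeparable (ball d (q : ℝ))}, ball d (q : ℝ)

lemma isSeparable_separableBallUnion {D : Set X} (hD : D.Countable) :
    TopologicalSpace.IsSeparable (separableBallUnion D) := by
  have := hD.to_subtype
  simp only [separableBallUnion, biUnion_eq_iUnion D]
  exact TopologicalSpace.isSeparable_iUnion.2 fun d => by
    rw [biUnion_eq_iUnion]
    exact TopologicalSpace.isSeparable_iUnion.2 fun q => q.2

lemma isOpen_separableBallUnion (D : Set X) : IsOpen (separableBallUnion D) :=
  isOpen_biUnion fun _ _ => isOpen_biUnion fun _ _ => isOpen_ball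

lemma closure_subset_separableBallUnion
    (hX : ∀ x : X, ∃ r > 0, TopologicalSpace.IsSeparable (ball x r)) (D : Set X) :
    closure D ⊆ separableBallUnion D := by
  intro p hp
  obtain ⟨r, hr, hsep⟩ := hX p
  obtain ⟨d, hd, hpd⟩ := Metric.mem_closure_iff.1 hp (r / 2) (half_pos hr)
  obtain ⟨q, hpq, hqr⟩ := exists_rat_btwn hpd
  refine mem_biUnion hd (mem_biUnion (hsep.mono (ball_subset_ball' ?_)) hpq)
  rw [dist_comm]
  linarith

lemma separableSpace_of_forall_isSeparable_ball [PreconnectedSpace X]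
    (hX : ∀ x : X, ∃ r > 0, TopologicalSpace.IsSeparable (ball x r)) :
    TopologicalSpace.SeparableSpace X := by
  rcases isEmpty_or_nonempty X with hempty | ⟨⟨x₀⟩⟩
  · infer_instance
  choose! next hnext_countable hnext using fun (D : Set X) (hD : D.Countable) =>
    isSeparable_separableBallUnion hD
  let D : ℕ → Set X := fun k => next^[k] {x₀}
  have hD_succ (k : ℕ) : D (k + 1) = next (D k) := Function.iterate_succ_apply' ..
  have hD_countable (k : ℕ) : (D k).Countable := by
    induction k with
    | zero => exact countable_singleton x₀
    | succ k ih => exact hD_succ k ▸ hnext_countable _ ih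
  have hle : separableBallUnion (⋃ k, D k) ⊆ closure (⋃ k, D k) := by
    refine iUnion₂_subset fun d hd => ?_
    obtain ⟨k, hk⟩ := mem_iUnion.1 hd
    calc _ ⊆ separableBallUnion (D k) := subset_biUnion_of_mem hk
      _ ⊆ closure (D (k + 1)) := hD_succ k ▸ hnext _ (hD_countable k)
      _ ⊆ closure (⋃ k, D k) := closure_mono (subset_iUnion D (k + 1))
  have hclosed : closure (⋃ k, D k) = separableBallUnion (⋃ k, D k) :=
    (closure_subset_separableBallUnion hX _).antisymm hle
  have hclopen : IsClopen (closure (⋃ k, D k)) :=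
    ⟨isClosed_closure, hclosed ▸ isOpen_separableBallUnion _⟩
  have hdense : Dense (⋃ k, D k) := dense_iff_closure_eq.2 <|
    hclopen.eq_univ ⟨x₀, subset_closure (mem_iUnion.2 ⟨0, rfl⟩)⟩
  exact ⟨⋃ k, D k, countable_iUnion hD_countable, hdense⟩

lemma IsGeodesicSpace.secondCountableTopology [MeasurableSpace X] [BorelSpace X]
    {m : Measure X} [IsLocallyFiniteMeasure m] (hgeo : IsGeodesicSpace X)
    (hpos : ∀ x, ∀ ε > 0, 0 < m (ball x ε)) : SecondCountableTopology X := by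
  have := hgeo.preconnectedSpace
  have : TopologicalSpace.SeparableSpace X := by
    refine separableSpace_of_forall_isSeparable_ball fun x => ?_
    obtain ⟨s, hs, hms⟩ := m.finiteAt_nhds x
    obtain ⟨ε, hε, hεs⟩ := Metric.mem_nhds_iff.1 hs
    exact ⟨ε, hε, isSeparable_of_isOpen_of_measure_ne_top hpos isOpen_ball
      ((measure_mono hεs).trans_lt hms).ne⟩
  exact UniformSpace.secondCountable_of_separable X

end Separability

section MeasurableSelection

lemma exists_setOf_forall_lt_le_subset_of_Iic_subset {W : Set (ℕ → ℕ)} (hW : IsOpen W)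
    {b : ℕ → ℕ} (hb : Iic b ⊆ W) : ∃ n, {a : ℕ → ℕ | ∀ i < n, a i ≤ b i} ⊆ W := by
  let _ : MetricSpace (ℕ → ℕ) := PiNat.metricSpaceNatNat
  have hcompact : IsCompact (Iic b) := by
    rw [← Icc_bot]
    exact isCompact_Icc
  obtain ⟨δ, hδ, hδW⟩ := hcompact.exists_thickening_subset_open hW hb
  obtain ⟨n, hn⟩ := exists_pow_lt_of_lt_one hδ (one_half_lt_one (α := ℝ))
  refine ⟨n, fun a ha => hδW (mem_thickening_iff.2 ⟨a ⊓ b, mem_Iic.2 inf_le_right, ?_⟩)⟩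
  have hcyl : a ∈ PiNat.cylinder (a ⊓ b) n := fun i hi => (min_eq_left (ha i hi)).symm
  exact (PiNat.mem_cylinder_iff_dist_le.1 hcyl).trans_lt hn

variable {P Y : Type*} [MeasurableSpace Y]

lemma exists_lt_measure_image_inter_setOf_le (μ : Measure Y) (f : (ℕ → ℕ) → Y)
    {S : Set (ℕ → ℕ)} {L : ℝ≥0∞} (hL : L < μ (f '' S)) (n : ℕ) :
    ∃ k, L < μ (f '' (S ∩ {a | a n ≤ k})) := by
  have hunion : f '' S = ⋃ k, f '' (S ∩ {a | a n ≤ k}) := by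
    rw [← image_iUnion, ← inter_iUnion, iUnion_eq_univ_iff.2 fun a => ⟨a n, le_refl (a n)⟩,
      inter_univ]
  have hmono : Monotone fun k => f '' (S ∩ {a | a n ≤ k}) := fun i j hij =>
    image_mono (inter_subset_inter_right _ fun a ha => le_trans ha hij)
  rwa [hunion, hmono.measure_iUnion, lt_iSup_iff] at hL

lemma exists_forall_lt_measure_image_setOf_forall_lt_le (μ : Measure Y) (f : (ℕ → ℕ) → Y)
    {L : ℝ≥0∞} (hL : L < μ (range f)) :
    ∃ b : ℕ → ℕ, ∀ n, L < μ (f '' {a | ∀ i < n, a i ≤ b i}) := by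
  choose! k hk using fun S (hS : L < μ (f '' S)) => exists_lt_measure_image_inter_setOf_le μ f hS
  let S : ℕ → Set (ℕ → ℕ) := Nat.rec univ fun n S => S ∩ {a | a n ≤ k S n}
  have hS (n : ℕ) : L < μ (f '' S n) := by
    induction n with
    | zero => rwa [← image_univ] at hL
    | succ n ih => exact hk _ ih n
  have hSb (n : ℕ) : S n = {a | ∀ i < n, a i ≤ k (S i) i} := by
    induction n with
    | zero => simp [S]
    | succ n ih =>
      ext a
      simp only [mem_ofPred_eq, Nat.forall_lt_succ_right]
      exact and_congr_left' (Set.ext_iff.1 ih a)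
  exact ⟨fun i => k (S i) i, fun n => hSb n ▸ hS n⟩

variable [TopologicalSpace Y]

lemma exists_isCompact_le_measure_image [TopologicalSpace P] [PolishSpace P] [Nonempty P]
    (μ : Measure Y) [μ.OuterRegular] {e : P → Y} (he : Continuous e)
    {L : ℝ≥0∞} (hL : L < μ (range e)) : ∃ K : Set P, IsCompact K ∧ L ≤ μ (e '' K) := by
  obtain ⟨f, hf, hf_surj⟩ := PolishSpace.exists_nat_nat_continuous_surjective P
  obtain ⟨b, hb⟩ := exists_forall_lt_measure_image_setOf_forall_lt_le μ (e ∘ f)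
    (by rwa [hf_surj.range_comp])
  have hcompact : IsCompact (Iic b) := by
    rw [← Icc_bot]
    exact isCompact_Icc
  refine ⟨f '' Iic b, hcompact.image hf, ?_⟩
  rw [← image_comp, Set.measure_eq_iInf_isOpen]
  refine le_iInf₂ fun U hU => le_iInf fun hU_open => ?_
  obtain ⟨n, hn⟩ := exists_setOf_forall_lt_le_subset_of_Iic_subset
    (hU_open.preimage (he.comp hf)) (image_subset_iff.1 hU)
  exact (hb n).le.trans (measure_mono (image_subset_iff.2 hn))

variable [T2Space Y] [BorelSpace Y]

/- The section picks the least point of each fibre; its sublevel sets are images of compact sets. -/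
lemma exists_measurable_section_of_isCompact_real {C : Set ℝ} (hC : IsCompact C) {f : C → Y}
    (hf : Continuous f) : ∃ s : Y → ℝ, Measurable s ∧ ∀ c, ∃ c' : C, c' = s (f c) ∧ f c' = f c := by
  have := isCompact_iff_compactSpace.1 hC
  have hfibre (y : Y) : IsCompact ((↑) '' (f ⁻¹' {y}) : Set ℝ) :=
    (isClosed_singleton.preimage hf).isCompact.image continuous_subtype_val
  have hmem (c : C) : sInf ((↑) '' (f ⁻¹' {f c}) : Set ℝ) ∈ ((↑) '' (f ⁻¹' {f c}) : Set ℝ) :=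
    (hfibre _).sInf_mem ⟨c, c, rfl, rfl⟩
  refine ⟨fun y => sInf ((↑) '' (f ⁻¹' {y})), measurable_of_Iic fun t => ?_, fun c => ?_⟩
  · have hpre : (fun y => sInf ((↑) '' (f ⁻¹' {y}) : Set ℝ)) ⁻¹' Iic t =
        f '' {c | (c : ℝ) ≤ t} ∪ ((range f)ᶜ ∩ {_y | 0 ≤ t}) := by
      ext y
      by_cases hy : y ∈ range f
      · obtain ⟨c, rfl⟩ := hy
        simp only [mem_preimage, mem_Iic, mem_union, mem_inter_iff, mem_compl_iff, mem_range_self,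
          not_true_eq_false, false_and, or_false]
        refine ⟨fun h => ?_, fun ⟨c', hc't, hc'⟩ =>
          (csInf_le (hfibre _).bddBelow ⟨c', hc', rfl⟩).trans hc't⟩
        obtain ⟨c', hc', hc's⟩ := hmem c
        exact ⟨c', hc's.trans_le h, hc'⟩
      · have hempty : f ⁻¹' {y} = ∅ := preimage_singleton_eq_empty.2 hy
        have himage : y ∉ f '' {c | (c : ℝ) ≤ t} := fun h => hy (image_subset_range _ _ h)
        simp [hempty, hy, himage]
    rw [hpre]
    have hclosed : IsClosed {c : C | (c : ℝ) ≤ t} :=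
      isClosed_le continuous_subtype_val continuous_const
    exact (hclosed.isCompact.image hf).measurableSet.union
      ((isCompact_range hf).measurableSet.compl.inter (.const _))
  · obtain ⟨c', hc', hc's⟩ := hmem c
    exact ⟨c', hc's, hc'⟩

lemma exists_measurable_section_of_isCompact [MetricSpace P] [MeasurableSpace P]
    [BorelSpace P] [Nonempty P] {K : Set P} (hK : IsCompact K) {e : P → Y} (he : ContinuousOn e K) :
    ∃ s : Y → P, Measurable s ∧ ∀ y ∈ e '' K, e (s y) = y := by
  rcases K.eq_empty_or_nonempty with rfl | hne
  · exact ⟨fun _ => Classical.arbitrary P, measurable_const, by simp⟩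
  have := isCompact_iff_compactSpace.1 hK
  have := hne.to_subtype
  obtain ⟨q, hq, hq_surj⟩ := exists_nat_bool_continuous_surjective_of_compact K
  let p : cantorSet → P := fun c => q (cantorSetHomeomorphNatToBool c)
  have hp : Continuous p :=
    continuous_subtype_val.comp (hq.comp cantorSetHomeomorphNatToBool.continuous)
  obtain ⟨s, hs, hse⟩ := exists_measurable_section_of_isCompact_real isCompact_cantorSet
    (f := e ∘ p) (he.comp_continuous hp fun c => (q _).2)
  obtain ⟨p', hp', hpp'⟩ := (MeasurableEmbedding.subtype_coe
    isCompact_cantorSet.measurableSet).exists_measurable_extend hp.measurable fun _ => ‹Nonempty P›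
  refine ⟨p' ∘ s, hp'.comp hs, ?_⟩
  rintro _ ⟨x, hx, rfl⟩
  obtain ⟨a, ha⟩ := hq_surj ⟨x, hx⟩
  obtain ⟨c, hcs, hc⟩ := hse (cantorSetHomeomorphNatToBool.symm a)
  have hpx : p (cantorSetHomeomorphNatToBool.symm a) = x := by simp [p, ha]
  have hpc : p' c = p c := congrFun hpp' c
  simp only [Function.comp_apply, hpx] at hcs hc
  rw [Function.comp_apply, ← hcs, hpc, hc]

lemma exists_measurable_ae_rightInverse [TopologicalSpace P] [PolishSpace P] [MeasurableSpace P]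
    [BorelSpace P] [Nonempty P] (μ : Measure Y) [IsFiniteMeasure μ] [μ.OuterRegular] {e : P → Y}
    (he : Continuous e) (he_surj : Function.Surjective e) :
    ∃ s : Y → P, Measurable s ∧ ∀ᵐ y ∂μ, e (s y) = y := by
  let _ : MetricSpace P := TopologicalSpace.metrizableSpaceMetric P
  rcases eq_or_ne μ 0 with rfl | hμ
  · exact ⟨fun _ => Classical.arbitrary P, measurable_const, by simp⟩
  obtain ⟨L, -, hL, hL_lim⟩ := exists_seq_strictMono_tendsto' (Measure.measure_univ_pos.2 hμ)
  choose K hK hLK using fun n => exists_isCompact_le_measure_image μ he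
    (L := L n) (by rw [he_surj.range_eq]; exact (hL n).2)
  choose s hs hse using fun n => exists_measurable_section_of_isCompact (hK n) he.continuousOn
  let A : ℕ → Set Y := fun n => e '' K n
  have hA (n : ℕ) : MeasurableSet (A n) := ((hK n).image he).measurableSet
  obtain ⟨S, hS, hSs⟩ := exists_measurable_piecewise (disjointed A)
    (fun n => .disjointed hA n) s hs fun i j hij y hy =>
      absurd hy.2 (disjoint_left.1 (disjoint_disjointed A hij) hy.1)
  have hfull : ∀ᵐ y ∂μ, y ∈ ⋃ n, A n := by
    refine (ae_iff_measure_eq (MeasurableSet.iUnion hA).nullMeasurableSet).2 (le_antisymm ?_ ?_)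
    · exact measure_mono (subset_univ _)
    · exact le_of_tendsto' hL_lim fun n => (hLK n).trans (measure_mono (subset_iUnion A n))
  refine ⟨S, hS, hfull.mono fun y hy => ?_⟩
  rw [← iUnion_disjointed] at hy
  obtain ⟨n, hn⟩ := mem_iUnion.1 hy
  rw [hSs n hn]
  exact hse n y (disjointed_subset A n hn)

end MeasurableSelection

section GeodesicSelection

variable {X : Type*} [MetricSpace X]

/-- The constant-speed geodesics of `X` as a subset of the space of continuous paths, which is
Polish when `X` is. -/
def geodesicPaths (X : Type*) [MetricSpace X] : Set C(unitInterval, X) :=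
  {γ | ∀ s t : unitInterval, dist (γ s) (γ t) = |(s : ℝ) - t| * dist (γ 0) (γ 1)}

lemma isClosed_geodesicPaths : IsClosed (geodesicPaths X) := by
  simp only [geodesicPaths, ofPred_forall]
  exact isClosed_iInter fun s => isClosed_iInter fun t =>
    isClosed_eq (by fun_prop) (by fun_prop)

lemma isGeodesicMap_IccExtend (γ : geodesicPaths X) :
    IsGeodesicMap (IccExtend zero_le_one γ.1) := fun s hs t ht => by
  rw [IccExtend_of_mem _ _ hs, IccExtend_of_mem _ _ ht, IccExtend_left, IccExtend_right]
  exact γ.2 ⟨s, hs⟩ ⟨t, ht⟩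

lemma IsGeodesicSpace.surjective_endpoints (hgeo : IsGeodesicSpace X) :
    Function.Surjective fun γ : geodesicPaths X => (γ.1 0, γ.1 1) := by
  rintro ⟨x, y⟩
  obtain ⟨γ, hγ, rfl, rfl⟩ := hgeo x y
  refine ⟨⟨⟨fun t => γ t, hγ.lipschitzOnWith.continuousOn.domRestrict⟩, fun s t => ?_⟩, ?_⟩
  · exact hγ s s.2 t t.2
  · rfl

lemma IsGeodesicSpace.exists_measurable_geodesic [CompleteSpace X] [SecondCountableTopology X]
    [MeasurableSpace X] [BorelSpace X] [Nonempty X] (hgeo : IsGeodesicSpace X)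
    (σ : Measure (X × X)) [IsFiniteMeasure σ] :
    ∃ G : ℝ → X × X → X, Measurable (Function.uncurry G) ∧
      ∀ᵐ w ∂σ, IsGeodesicMap (fun t => G t w) ∧ G 0 w = w.1 ∧ G 1 w = w.2 := by
  have hpolish : PolishSpace (geodesicPaths X) := isClosed_geodesicPaths.polishSpace
  let _ : MeasurableSpace (geodesicPaths X) := borel _
  have : BorelSpace (geodesicPaths X) := ⟨rfl⟩
  have : Nonempty (geodesicPaths X) := hgeo.surjective_endpoints.nonempty
  obtain ⟨s, hs, hse⟩ := exists_measurable_ae_rightInverse σ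
    (e := fun γ : geodesicPaths X => (γ.1 0, γ.1 1)) (by fun_prop) hgeo.surjective_endpoints
  refine ⟨fun t w => IccExtend zero_le_one (s w).1 t, ?_, ?_⟩
  · have hcont : Continuous fun p : ℝ × geodesicPaths X => IccExtend zero_le_one p.2.1 p.1 :=
      (continuous_subtype_val.comp continuous_snd).eval (continuous_projIcc.comp continuous_fst)
    exact hcont.measurable.comp (measurable_fst.prodMk (hs.comp measurable_snd))
  · filter_upwards [hse] with w hw
    rw [Prod.ext_iff] at hw
    refine ⟨isGeodesicMap_IccExtend (s w), ?_, ?_⟩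
    · rw [IccExtend_left]
      exact hw.1
    · rw [IccExtend_right]
      exact hw.2

end GeodesicSelection

section Wasserstein

variable {X Ω : Type*} [MetricSpace X] [MeasurableSpace X] [MeasurableSpace Ω]

lemma W2_eq_iInf (μ ν : Measure X) :
    W2 μ ν = ⨅ (σ : Measure (X × X)) (_ : σ.map Prod.fst = μ ∧ σ.map Prod.snd = ν),
      (∫⁻ p, edist p.1 p.2 ^ 2 ∂σ) ^ (1 / 2 : ℝ) :=
  (ENNReal.orderIsoRpow (1 / 2 : ℝ) (by norm_num)).map_iInf₂ fun (σ : Measure (X × X)) _ =>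
    ∫⁻ p, edist p.1 p.2 ^ 2 ∂σ

/-- `(P, G)` is an optimal dynamical plan: a random geodesic `G · ω` of `X`, with `ω` distributed
according to `P`, whose endpoints realize the Wasserstein distance of their laws. The paths are
parametrized by `Ω` since `ℝ → X` carries no standard Borel structure. -/
structure IsOptimalDynamicPlan (P : Measure Ω) (G : ℝ → Ω → X) : Prop where
  measurable_uncurry : Measurable (Function.uncurry G)
  isGeodesicMap : ∀ᵐ ω ∂P, IsGeodesicMap fun t => G t ω
  cost_ne_top : ∫⁻ ω, edist (G 0 ω) (G 1 ω) ^ 2 ∂P ≠ ∞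
  cost_le : ∫⁻ ω, edist (G 0 ω) (G 1 ω) ^ 2 ∂P ≤ W2sq (P.map (G 0)) (P.map (G 1))

namespace IsOptimalDynamicPlan

variable {P : Measure Ω} {G : ℝ → Ω → X}

lemma measurable (h : IsOptimalDynamicPlan P G) (t : ℝ) : Measurable (G t) :=
  h.measurable_uncurry.of_uncurry_left

lemma smul (h : IsOptimalDynamicPlan P G) {c : ℝ≥0∞} (hc : c ≠ 0) (hc' : c ≠ ∞) :
    IsOptimalDynamicPlan (c • P) G where
  measurable_uncurry := h.measurable_uncurry
  isGeodesicMap := Measure.ae_smul_measure h.isGeodesicMap c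
  cost_ne_top := by
    rw [lintegral_smul_measure]
    exact ENNReal.mul_ne_top hc' h.cost_ne_top
  cost_le := by
    refine le_iInf₂ fun σ hσ => ?_
    have hcost := h.cost_le.trans (iInf₂_le (c⁻¹ • σ)
      ⟨by rw [Measure.map_smul, hσ.1, Measure.map_smul, smul_smul, ENNReal.inv_mul_cancel hc hc',
        one_smul], by rw [Measure.map_smul, hσ.2, Measure.map_smul, smul_smul,
        ENNReal.inv_mul_cancel hc hc', one_smul]⟩)
    rw [lintegral_smul_measure, smul_eq_mul] at hcost ⊢
    calc c * ∫⁻ ω, edist (G 0 ω) (G 1 ω) ^ 2 ∂P ≤ c * (c⁻¹ * ∫⁻ p, edist p.1 p.2 ^ 2 ∂σ) := by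
          gcongr
      _ = ∫⁻ p, edist p.1 p.2 ^ 2 ∂σ := by
          rw [← mul_assoc, ENNReal.mul_inv_cancel hc hc', one_mul]

end IsOptimalDynamicPlan

variable [SecondCountableTopology X] [BorelSpace X]

lemma W2sq_map_le {P : Measure Ω} {f g : Ω → X} (hf : Measurable f) (hg : Measurable g) :
    W2sq (P.map f) (P.map g) ≤ ∫⁻ ω, edist (f ω) (g ω) ^ 2 ∂P := by
  refine (iInf₂_le (P.map fun ω => (f ω, g ω))
    ⟨Measure.fst_map_prodMk hg, Measure.snd_map_prodMk hf⟩).trans_eq ?_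
  rw [lintegral_map (by fun_prop) (hf.prodMk hg)]

lemma W2_map_le {P : Measure Ω} {f g : Ω → X} (hf : Measurable f) (hg : Measurable g) :
    W2 (P.map f) (P.map g) ≤ (∫⁻ ω, edist (f ω) (g ω) ^ 2 ∂P) ^ (1 / 2 : ℝ) :=
  ENNReal.rpow_le_rpow (W2sq_map_le hf hg) (by norm_num)

lemma W2_comm (μ ν : Measure X) : W2 μ ν = W2 ν μ := by
  have hle (μ ν : Measure X) : W2sq μ ν ≤ W2sq ν μ := by
    refine le_iInf₂ fun σ hσ => ?_
    have h := W2sq_map_le (P := σ) measurable_snd measurable_fst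
    rw [hσ.1, hσ.2] at h
    simpa only [edist_comm] using h
  rw [W2, W2, (hle μ ν).antisymm (hle ν μ)]

lemma W2sq_ne_top_of_ae_mem_ball {μ ν : Measure X} [IsProbabilityMeasure μ]
    [IsProbabilityMeasure ν] {x : X} {r : ℝ} (hμ : ∀ᵐ y ∂μ, y ∈ ball x r)
    (hν : ∀ᵐ y ∂ν, y ∈ ball x r) : W2sq μ ν ≠ ∞ := by
  have hcost := W2sq_map_le (P := μ.prod ν) measurable_fst measurable_snd
  simp only [Measure.map_fst_prod, Measure.map_snd_prod, measure_univ, one_smul] at hcost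
  have hbound : ∀ᵐ p ∂μ.prod ν, edist p.1 p.2 ^ 2 ≤ (ENNReal.ofReal r + ENNReal.ofReal r) ^ 2 := by
    filter_upwards [Measure.quasiMeasurePreserving_fst.ae hμ,
      Measure.quasiMeasurePreserving_snd.ae hν] with p hp₁ hp₂
    gcongr
    refine (edist_triangle_right _ _ x).trans (add_le_add ?_ ?_)
    · exact (edist_dist _ _).trans_le (ENNReal.ofReal_le_ofReal hp₁.le)
    · exact (edist_dist _ _).trans_le (ENNReal.ofReal_le_ofReal hp₂.le)
  refine ne_top_of_le_ne_top ?_ (hcost.trans (lintegral_mono_ae hbound))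
  rw [lintegral_const, measure_univ, mul_one]
  exact ENNReal.pow_ne_top (ENNReal.add_ne_top.2 ⟨ENNReal.ofReal_ne_top, ENNReal.ofReal_ne_top⟩)

lemma exists_gluing [CompleteSpace X] (σ₁ σ₂ : Measure (X × X)) [IsFiniteMeasure σ₁]
    [IsFiniteMeasure σ₂] (h : σ₁.map Prod.snd = σ₂.map Prod.fst) :
    ∃ T : Measure ((X × X) × X), T.map Prod.fst = σ₁ ∧ T.map (fun p => (p.1.2, p.2)) = σ₂ := by
  rcases isEmpty_or_nonempty X with hX | hX
  · exact ⟨0, by simp [Measure.eq_zero_of_isEmpty σ₁], by simp [Measure.eq_zero_of_isEmpty σ₂]⟩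
  let κ := σ₂.condKernel
  refine ⟨σ₁ ⊗ₘ (κ.comap Prod.snd measurable_snd), Measure.fst_compProd _ _, ?_⟩
  have hσ₂ : (σ₁.map Prod.snd) ⊗ₘ κ = σ₂ := h ▸ σ₂.disintegrate κ
  rw [← hσ₂]
  ext A hA
  have hm : Measurable fun p : (X × X) × X => (p.1.2, p.2) := by fun_prop
  rw [Measure.map_apply hm hA, Measure.compProd_apply hA, Measure.compProd_apply (hm hA),
    lintegral_map (Kernel.measurable_kernel_prodMk_left hA) measurable_snd]
  rfl

lemma W2_le_add_of_couplings [CompleteSpace X] (σ₁ σ₂ : Measure (X × X)) [IsFiniteMeasure σ₁]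
    [IsFiniteMeasure σ₂] (h : σ₁.map Prod.snd = σ₂.map Prod.fst) :
    W2 (σ₁.map Prod.fst) (σ₂.map Prod.snd) ≤ (∫⁻ p, edist p.1 p.2 ^ 2 ∂σ₁) ^ (1 / 2 : ℝ) +
      (∫⁻ p, edist p.1 p.2 ^ 2 ∂σ₂) ^ (1 / 2 : ℝ) := by
  obtain ⟨T, rfl, rfl⟩ := exists_gluing σ₁ σ₂ h
  have hm : Measurable fun p : (X × X) × X => (p.1.2, p.2) := by fun_prop
  rw [Measure.map_map measurable_fst measurable_fst, Measure.map_map measurable_snd hm,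
    lintegral_map (by fun_prop) measurable_fst, lintegral_map (by fun_prop) hm]
  have hminkowski := ENNReal.lintegral_Lp_add_le (μ := T) (p := 2)
    (f := fun p => edist p.1.1 p.1.2) (g := fun p => edist p.1.2 p.2)
    (Measurable.aemeasurable (by fun_prop)) (Measurable.aemeasurable (by fun_prop)) (by norm_num)
  simp only [Pi.add_apply, ENNReal.rpow_two] at hminkowski
  refine ((W2_map_le (by fun_prop) (by fun_prop)).trans ?_).trans hminkowski
  gcongr with p
  exact edist_triangle _ _ _

lemma W2_triangle [CompleteSpace X] (μ l ν : Measure X) [IsFiniteMeasure l] :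
    W2 μ ν ≤ W2 μ l + W2 l ν := by
  simp only [W2_eq_iInf μ l, W2_eq_iInf l ν, ENNReal.iInf_add, ENNReal.add_iInf]
  refine le_iInf₂ fun σ₂ h₂ => le_iInf₂ fun σ₁ h₁ => ?_
  have : IsFiniteMeasure σ₁ := by
    rw [← Measure.isFiniteMeasure_map_iff measurable_snd.aemeasurable, h₁.2]; infer_instance
  have : IsFiniteMeasure σ₂ := by
    rw [← Measure.isFiniteMeasure_map_iff measurable_fst.aemeasurable, h₂.1]; infer_instance
  rw [← h₁.1, ← h₂.2]
  exact W2_le_add_of_couplings σ₁ σ₂ (h₁.2.trans h₂.1.symm)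

lemma isW2Geodesic_of_forall_W2_le [CompleteSpace X] {Γ : ℝ → Measure X}
    (hprob : ∀ t ∈ Icc (0 : ℝ) 1, IsProbabilityMeasure (Γ t)) (hfin : W2 (Γ 0) (Γ 1) ≠ ∞)
    (hle : ∀ s ∈ Icc (0 : ℝ) 1, ∀ t ∈ Icc (0 : ℝ) 1,
      W2 (Γ s) (Γ t) ≤ ENNReal.ofReal |s - t| * W2 (Γ 0) (Γ 1)) : IsW2Geodesic Γ := by
  refine ⟨hprob, hfin, fun s hs t ht => (hle s hs t ht).antisymm ?_⟩
  wlog hst : s ≤ t generalizing s t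
  · rw [W2_comm (Γ s) (Γ t), abs_sub_comm]
    exact this t ht s hs (le_of_not_ge hst)
  set D := W2 (Γ 0) (Γ 1)
  have := hprob s hs
  have := hprob t ht
  have hs0 := hle 0 (by simp) s hs
  have ht1 := hle t ht 1 (by simp)
  rw [zero_sub, abs_neg, abs_of_nonneg hs.1] at hs0
  rw [abs_sub_comm, abs_of_nonneg (sub_nonneg.2 ht.2)] at ht1
  rw [abs_sub_comm, abs_of_nonneg (sub_nonneg.2 hst)]
  have hends : ENNReal.ofReal s * D + ENNReal.ofReal (1 - t) * D ≠ ∞ :=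
    ENNReal.add_ne_top.2 ⟨ENNReal.mul_ne_top ENNReal.ofReal_ne_top hfin,
      ENNReal.mul_ne_top ENNReal.ofReal_ne_top hfin⟩
  refine (ENNReal.add_le_add_iff_left hends).1 ?_
  calc ENNReal.ofReal s * D + ENNReal.ofReal (1 - t) * D + ENNReal.ofReal (t - s) * D = D := by
        rw [← add_mul, ← add_mul, ← ENNReal.ofReal_add hs.1 (sub_nonneg.2 ht.2),
          ← ENNReal.ofReal_add (add_nonneg hs.1 (sub_nonneg.2 ht.2)) (sub_nonneg.2 hst)]
        ring_nf
        simp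
    _ ≤ W2 (Γ 0) (Γ s) + (W2 (Γ s) (Γ t) + W2 (Γ t) (Γ 1)) :=
        (W2_triangle _ (Γ s) _).trans (add_le_add_right (W2_triangle _ (Γ t) _) _)
    _ ≤ ENNReal.ofReal s * D + (W2 (Γ s) (Γ t) + ENNReal.ofReal (1 - t) * D) := by gcongr
    _ = ENNReal.ofReal s * D + ENNReal.ofReal (1 - t) * D + W2 (Γ s) (Γ t) := by ring

namespace IsOptimalDynamicPlan

variable {P : Measure Ω} {G : ℝ → Ω → X}

lemma lintegral_edist_sq (h : IsOptimalDynamicPlan P G) {s t : ℝ} (hs : s ∈ Icc (0 : ℝ) 1)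
    (ht : t ∈ Icc (0 : ℝ) 1) : ∫⁻ ω, edist (G s ω) (G t ω) ^ 2 ∂P =
      ENNReal.ofReal |s - t| ^ 2 * ∫⁻ ω, edist (G 0 ω) (G 1 ω) ^ 2 ∂P := by
  rw [← lintegral_const_mul _ (((h.measurable 0).edist (h.measurable 1)).pow_const 2)]
  refine lintegral_congr_ae (h.isGeodesicMap.mono fun ω hω => ?_)
  dsimp only
  rw [← mul_pow, edist_dist, edist_dist, ← ENNReal.ofReal_mul (abs_nonneg _), hω s hs t ht]

lemma W2_endpoints (h : IsOptimalDynamicPlan P G) : W2 (P.map (G 0)) (P.map (G 1)) =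
    (∫⁻ ω, edist (G 0 ω) (G 1 ω) ^ 2 ∂P) ^ (1 / 2 : ℝ) :=
  (W2_map_le (h.measurable 0) (h.measurable 1)).antisymm
    (ENNReal.rpow_le_rpow h.cost_le (by norm_num))

lemma isW2Geodesic [CompleteSpace X] [IsProbabilityMeasure P] (h : IsOptimalDynamicPlan P G) :
    IsW2Geodesic fun t => P.map (G t) := by
  refine isW2Geodesic_of_forall_W2_le
    (fun t _ => Measure.isProbabilityMeasure_map (h.measurable t).aemeasurable) ?_
    fun s hs t ht => ?_
  · rw [h.W2_endpoints]
    exact ENNReal.rpow_ne_top_of_nonneg (by norm_num) h.cost_ne_top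
  · refine (W2_map_le (h.measurable s) (h.measurable t)).trans_eq ?_
    rw [h.W2_endpoints, h.lintegral_edist_sq hs ht, ENNReal.mul_rpow_of_nonneg _ _ (by norm_num),
      ← ENNReal.rpow_natCast_mul]
    norm_num

/- A better coupling of the restricted endpoint laws could be completed by the unchanged part of the
plan to a better coupling of the full endpoint laws. -/
lemma restrict (h : IsOptimalDynamicPlan P G) {A : Set Ω} (hA : MeasurableSet A) :
    IsOptimalDynamicPlan (P.restrict A) G where
  measurable_uncurry := h.measurable_uncurry
  isGeodesicMap := ae_restrict_of_ae h.isGeodesicMap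
  cost_ne_top := ne_top_of_le_ne_top h.cost_ne_top (setLIntegral_le_lintegral _ _)
  cost_le := by
    have hG (t : ℝ) : (P.restrict Aᶜ).map (G t) + (P.restrict A).map (G t) = P.map (G t) := by
      rw [← Measure.map_add _ _ (h.measurable t), add_comm,
        Measure.restrict_add_restrict_compl hA]
    refine le_iInf₂ fun σ hσ => ?_
    let τ := (P.restrict Aᶜ).map (fun ω => (G 0 ω, G 1 ω)) + σ
    have hτ : W2sq (P.map (G 0)) (P.map (G 1)) ≤ ∫⁻ p, edist p.1 p.2 ^ 2 ∂τ := by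
      refine iInf₂_le τ ⟨?_, ?_⟩
      · rw [Measure.map_add _ _ measurable_fst, hσ.1, ← hG 0]
        exact congrArg (· + _) (Measure.fst_map_prodMk (h.measurable 1))
      · rw [Measure.map_add _ _ measurable_snd, hσ.2, ← hG 1]
        exact congrArg (· + _) (Measure.snd_map_prodMk (h.measurable 0))
    have hcost := h.cost_le.trans hτ
    rw [lintegral_add_measure,
      lintegral_map (by fun_prop) ((h.measurable 0).prodMk (h.measurable 1)),
      ← lintegral_add_compl _ hA, add_comm] at hcost
    exact (ENNReal.add_le_add_iff_left
      (ne_top_of_le_ne_top h.cost_ne_top (setLIntegral_le_lintegral _ _))).1 hcost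

lemma cond [IsFiniteMeasure P] (h : IsOptimalDynamicPlan P G) {A : Set Ω} (hA : MeasurableSet A)
    (hPA : P A ≠ 0) : IsOptimalDynamicPlan P[|A] G :=
  (h.restrict hA).smul (ENNReal.inv_ne_zero.2 (measure_ne_top P A)) (ENNReal.inv_ne_top.2 hPA)

end IsOptimalDynamicPlan

end Wasserstein

section OptimalTransport

lemma lowerSemicontinuous_lintegral_coe {Y : Type*} [TopologicalSpace Y] [MeasurableSpace Y]
    [OpensMeasurableSpace Y] {f : Y → ℝ≥0} (hf : Continuous f) :
    LowerSemicontinuous fun σ : ProbabilityMeasure Y => ∫⁻ y, f y ∂(σ : Measure Y) := by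
  let F (n : ℕ) : BoundedContinuousFunction Y ℝ≥0 :=
    .mkOfBound ⟨fun y => min (f y) n, by fun_prop⟩ n fun y z =>
      abs_sub_le_of_nonneg_of_le (NNReal.coe_nonneg _) (by exact_mod_cast min_le_right (f y) n)
        (NNReal.coe_nonneg _) (by exact_mod_cast min_le_right (f z) n)
  have hF_mono : Monotone fun n y => (F n y : ℝ≥0∞) := fun n k hnk y =>
    ENNReal.coe_le_coe.2 (min_le_min_left _ (by exact_mod_cast hnk))
  have hF_iSup (y : Y) : ⨆ n, (F n y : ℝ≥0∞) = f y := by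
    obtain ⟨n, hn⟩ := exists_nat_ge (f y)
    exact (iSup_le fun k => ENNReal.coe_le_coe.2 (min_le_left _ _)).antisymm
      (le_iSup_of_le n (ENNReal.coe_le_coe.2 (le_min le_rfl hn)))
  have hlim (σ : ProbabilityMeasure Y) :
      ∫⁻ y, f y ∂(σ : Measure Y) = ⨆ n, ∫⁻ y, F n y ∂(σ : Measure Y) := by
    rw [← lintegral_iSup (fun n => (F n).continuous.measurable.coe_nnreal_ennreal) hF_mono]
    simp only [hF_iSup]
  simp only [hlim]
  exact lowerSemicontinuous_iSup fun n =>
    (ProbabilityMeasure.continuous_lintegral_boundedContinuousFunction (F n)).lowerSemicontinuous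

variable {X : Type*} [MetricSpace X] [CompleteSpace X] [SecondCountableTopology X]
  [MeasurableSpace X] [BorelSpace X]

lemma isCompact_setOf_map_fst_eq_map_snd_eq (μ ν : ProbabilityMeasure X) :
    IsCompact {σ : ProbabilityMeasure (X × X) |
      σ.map measurable_fst.aemeasurable = μ ∧ σ.map measurable_snd.aemeasurable = ν} := by
  have hclosed := (isClosed_eq (ProbabilityMeasure.continuous_map (Ω := X × X) continuous_fst)
    (continuous_const (y := μ))).inter
    (isClosed_eq (ProbabilityMeasure.continuous_map continuous_snd) (continuous_const (y := ν)))
  rw [← ofPred_and] at hclosed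
  rw [← hclosed.closure_eq]
  refine isCompact_closure_of_isTightMeasureSet (IsTightMeasureSet.prodMk
    ((isTightMeasureSet_singleton (μ := (μ : Measure X))).subset ?_)
    ((isTightMeasureSet_singleton (μ := (ν : Measure X))).subset ?_))
  · rintro _ ⟨_, ⟨σ, hσ, rfl⟩, rfl⟩
    exact congrArg Subtype.val hσ.1
  · rintro _ ⟨_, ⟨σ, hσ, rfl⟩, rfl⟩
    exact congrArg Subtype.val hσ.2

lemma exists_coupling_le_W2sq (μ ν : Measure X) [IsProbabilityMeasure μ]
    [IsProbabilityMeasure ν] : ∃ σ : Measure (X × X), σ.map Prod.fst = μ ∧ σ.map Prod.snd = ν ∧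
      ∫⁻ p, edist p.1 p.2 ^ 2 ∂σ ≤ W2sq μ ν := by
  let μ' : ProbabilityMeasure X := ⟨μ, inferInstance⟩
  let ν' : ProbabilityMeasure X := ⟨ν, inferInstance⟩
  have hlsc := lowerSemicontinuous_lintegral_coe (Y := X × X) (f := fun p => nndist p.1 p.2 ^ 2)
    (by fun_prop)
  simp only [ENNReal.coe_pow, ← edist_nndist] at hlsc
  obtain ⟨σ, hσ, hmin⟩ := LowerSemicontinuousOn.exists_isMinOn
    (s := {σ : ProbabilityMeasure (X × X) |
      σ.map measurable_fst.aemeasurable = μ' ∧ σ.map measurable_snd.aemeasurable = ν'})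
    ⟨⟨μ.prod ν, inferInstance⟩,
      Subtype.ext (Measure.map_fst_prod.trans (by rw [measure_univ, one_smul])),
      Subtype.ext (Measure.map_snd_prod.trans (by rw [measure_univ, one_smul]))⟩
    (isCompact_setOf_map_fst_eq_map_snd_eq μ' ν') (hlsc.lowerSemicontinuousOn _)
  refine ⟨σ, congrArg Subtype.val hσ.1, congrArg Subtype.val hσ.2,
    le_iInf₂ fun τ hτ => ?_⟩
  have : IsProbabilityMeasure (τ.map Prod.fst) := by rwa [hτ.1]
  have : IsProbabilityMeasure τ := Measure.isProbabilityMeasure_of_map Prod.fst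
  exact hmin (show (⟨τ, this⟩ : ProbabilityMeasure (X × X)) ∈ _ from
    ⟨Subtype.ext hτ.1, Subtype.ext hτ.2⟩)

lemma IsGeodesicSpace.exists_isOptimalDynamicPlan (hgeo : IsGeodesicSpace X) (μ ν : Measure X)
    [IsProbabilityMeasure μ] [IsProbabilityMeasure ν] (hfin : W2sq μ ν ≠ ∞) :
    ∃ (P : Measure (X × X)) (G : ℝ → X × X → X), IsProbabilityMeasure P ∧
      IsOptimalDynamicPlan P G ∧ P.map (G 0) = μ ∧ P.map (G 1) = ν := by
  obtain ⟨σ, h₀, h₁, hcost⟩ := exists_coupling_le_W2sq μ ν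
  have : IsProbabilityMeasure (σ.map Prod.fst) := by rwa [h₀]
  have : IsProbabilityMeasure σ := Measure.isProbabilityMeasure_of_map Prod.fst
  have : Nonempty X := nonempty_of_isProbabilityMeasure μ
  obtain ⟨G, hG, hGgeo⟩ := hgeo.exists_measurable_geodesic σ
  have hG₀ : σ.map (G 0) = μ := by
    rw [← h₀, Measure.map_congr (hGgeo.mono fun w hw => hw.2.1)]
  have hG₁ : σ.map (G 1) = ν := by
    rw [← h₁, Measure.map_congr (hGgeo.mono fun w hw => hw.2.2)]
  have hcost_eq : ∫⁻ w, edist (G 0 w) (G 1 w) ^ 2 ∂σ = ∫⁻ w, edist w.1 w.2 ^ 2 ∂σ :=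
    lintegral_congr_ae (hGgeo.mono fun w hw => by dsimp only; rw [hw.2.1, hw.2.2])
  exact ⟨σ, G, inferInstance, ⟨hG, hGgeo.mono fun w hw => hw.1,
    hcost_eq ▸ ne_top_of_le_ne_top hfin hcost, by rwa [hG₀, hG₁, hcost_eq]⟩, hG₀, hG₁⟩

end OptimalTransport

section Renyi

/-- The Rényi integral `∫ ρ^(1-1/N) dm = -E_N(ν)`, where `ρ` is the density of the absolutely
continuous part of `ν`. Unlike `E_N` it takes its values in `[0,∞]`. -/
noncomputable def renyiIntegral {Y : Type*} [MeasurableSpace Y] (N : ℝ) (m ν : Measure Y) : ℝ≥0∞ :=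
  ∫⁻ y, renyiIntegrand N (ν.rnDeriv m y) ∂m

lemma cond_le_inv_smul {Y : Type*} [MeasurableSpace Y] (m : Measure Y) (A : Set Y) :
    m[|A] ≤ (m A)⁻¹ • m := by
  rw [ProbabilityTheory.cond]
  gcongr
  exact Measure.restrict_le_self

section Bounds

variable {Y : Type*} [MeasurableSpace Y] {m ν : Measure Y} [IsProbabilityMeasure ν] {N : ℝ}

lemma renyiIntegral_le_rpow (hN : 1 ≤ N) {E : Set Y} (hE : MeasurableSet E) (hν : ν Eᶜ = 0) :
    renyiIntegral N m ν ≤ m E ^ (1 / N) := by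
  have hp : 0 ≤ 1 - 1 / N := sub_nonneg.2 ((div_le_one (by positivity)).2 hN)
  have hcompl : ∫⁻ y in Eᶜ, renyiIntegrand N (ν.rnDeriv m y) ∂m = 0 := by
    have hzero : ∫⁻ y in Eᶜ, ν.rnDeriv m y ∂m = 0 :=
      le_antisymm ((Measure.setLIntegral_rnDeriv_le Eᶜ).trans hν.le) zero_le
    rw [lintegral_eq_zero_iff (Measure.measurable_rnDeriv ν m)] at hzero
    refine lintegral_eq_zero_of_ae_eq_zero (hzero.mono fun y hy => ?_)
    simp_all [renyiIntegrand]
  rw [renyiIntegral, ← lintegral_add_compl _ hE, hcompl, add_zero]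
  calc ∫⁻ y in E, renyiIntegrand N (ν.rnDeriv m y) ∂m
      ≤ ∫⁻ y in E, ν.rnDeriv m y ^ (1 - 1 / N) * 1 ^ (1 / N) ∂m := by
        gcongr with y
        unfold renyiIntegrand
        split_ifs <;> simp
    _ ≤ (∫⁻ y in E, ν.rnDeriv m y ∂m) ^ (1 - 1 / N) * (∫⁻ _ in E, 1 ∂m) ^ (1 / N) :=
        ENNReal.lintegral_mul_norm_pow_le (Measure.measurable_rnDeriv ν m).aemeasurable
          aemeasurable_const hp (by positivity) (by ring)
    _ ≤ 1 * m E ^ (1 / N) := by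
        rw [setLIntegral_one]
        gcongr
        exact ENNReal.rpow_le_one ((Measure.setLIntegral_rnDeriv_le E).trans prob_le_one) hp
    _ = m E ^ (1 / N) := one_mul _

lemma inv_rpow_le_renyiIntegral [SigmaFinite m] (hN : 0 ≤ N) {c : ℝ≥0∞} (hν : ν ≤ c • m) :
    c⁻¹ ^ (1 / N) ≤ renyiIntegral N m ν := by
  have hac : ν ≪ m := hν.absolutelyContinuous.trans Measure.smul_absolutelyContinuous
  have hle : ∀ᵐ y ∂m, ν.rnDeriv m y ≤ c := by
    refine ae_le_of_forall_setLIntegral_le_of_sigmaFinite (Measure.measurable_rnDeriv ν m)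
      fun s _ _ => ?_
    rw [setLIntegral_const]
    exact (Measure.setLIntegral_rnDeriv_le s).trans (hν s)
  calc c⁻¹ ^ (1 / N) = ∫⁻ y, c⁻¹ ^ (1 / N) * ν.rnDeriv m y ∂m := by
        rw [lintegral_const_mul _ (Measure.measurable_rnDeriv ν m), Measure.lintegral_rnDeriv hac,
          measure_univ, mul_one]
    _ ≤ renyiIntegral N m ν := by
        refine lintegral_mono_ae ?_
        filter_upwards [hle, ν.rnDeriv_ne_top m] with y hy hfin
        unfold renyiIntegrand
        split_ifs with h0
        · simp [h0]
        · rw [sub_eq_add_neg, ENNReal.rpow_add _ _ h0 hfin, ENNReal.rpow_one, mul_comm,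
            ENNReal.rpow_neg, ← ENNReal.inv_rpow]
          gcongr

end Bounds

namespace StronglyDisplacementConvex

variable {X : Type*} [MetricSpace X] [MeasurableSpace X] {m : Measure X} {N : ℝ}

lemma add_le_renyiIntegral (hsdc : StronglyDisplacementConvex (renyiEntropy N m))
    {Γ : ℝ → Measure X} (hΓ : IsW2Geodesic Γ) {t : ℝ} (ht : t ∈ Icc (0 : ℝ) 1) :
    ENNReal.ofReal (1 - t) * renyiIntegral N m (Γ 0) + ENNReal.ofReal t * renyiIntegral N m (Γ 1) ≤
      renyiIntegral N m (Γ t) := by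
  have hcoe {a : ℝ} (ha : 0 ≤ a) : (a : EReal) = (ENNReal.ofReal a : EReal) := by
    rw [EReal.coe_ennreal_ofReal, max_eq_left ha]
  have hconvex := hsdc Γ hΓ t ht
  rw [renyiEntropy, renyiEntropy, renyiEntropy, hcoe (sub_nonneg.2 ht.2), hcoe ht.1, mul_neg,
    mul_neg, ← EReal.coe_ennreal_mul, ← EReal.coe_ennreal_mul, ← sub_eq_add_neg,
    ← EReal.neg_add (.inl (EReal.coe_ennreal_ne_bot _)) (.inr (EReal.coe_ennreal_ne_bot _)),
    EReal.neg_le_neg_iff, ← EReal.coe_ennreal_add, EReal.coe_ennreal_le_coe_ennreal_iff] at hconvex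
  exact hconvex

lemma inv_le_measure [SigmaFinite m] (hsdc : StronglyDisplacementConvex (renyiEntropy N m))
    (hN : 1 ≤ N) {Γ : ℝ → Measure X} (hΓ : IsW2Geodesic Γ) {c : ℝ≥0∞} (h₀ : Γ 0 ≤ c • m)
    (h₁ : Γ 1 ≤ c • m) {t : ℝ} (ht : t ∈ Icc (0 : ℝ) 1) {E : Set X} (hE : MeasurableSet E)
    (hΓE : Γ t Eᶜ = 0) : c⁻¹ ≤ m E := by
  have := hΓ.1 0 (by simp)
  have := hΓ.1 1 (by simp)
  have := hΓ.1 t ht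
  have hN₀ : 0 ≤ N := zero_le_one.trans hN
  rw [← ENNReal.rpow_le_rpow_iff (z := 1 / N) (by positivity)]
  calc c⁻¹ ^ (1 / N)
      = ENNReal.ofReal (1 - t) * c⁻¹ ^ (1 / N) + ENNReal.ofReal t * c⁻¹ ^ (1 / N) := by
        rw [← add_mul, ← ENNReal.ofReal_add (sub_nonneg.2 ht.2) ht.1, sub_add_cancel,
          ENNReal.ofReal_one, one_mul]
    _ ≤ ENNReal.ofReal (1 - t) * renyiIntegral N m (Γ 0) +
        ENNReal.ofReal t * renyiIntegral N m (Γ 1) := by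
        gcongr
        · exact inv_rpow_le_renyiIntegral hN₀ h₀
        · exact inv_rpow_le_renyiIntegral hN₀ h₁
    _ ≤ renyiIntegral N m (Γ t) := hsdc.add_le_renyiIntegral hΓ ht
    _ ≤ m E ^ (1 / N) := renyiIntegral_le_rpow hN hE hΓE

lemma ofReal_rpow_mul_measure_le [SigmaFinite m]
    (hsdc : StronglyDisplacementConvex (renyiEntropy N m)) (hN : 1 ≤ N) {Γ : ℝ → Measure X}
    (hΓ : IsW2Geodesic Γ) {A : Set X} (h₀ : Γ 0 ≤ (m A)⁻¹ • m) {t : ℝ} (ht : t ∈ Icc (0 : ℝ) 1)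
    {E : Set X} (hE : MeasurableSet E) (hΓE : Γ t Eᶜ = 0) :
    ENNReal.ofReal ((1 - t) ^ N) * m A ≤ m E := by
  have := hΓ.1 0 (by simp)
  have := hΓ.1 t ht
  have hN₀ : 0 < N := by positivity
  rw [← ENNReal.rpow_le_rpow_iff (z := 1 / N) (by positivity), ENNReal.mul_rpow_of_nonneg _ _
    (by positivity), ENNReal.ofReal_rpow_of_nonneg (Real.rpow_nonneg (sub_nonneg.2 ht.2) N)
    (by positivity), ← Real.rpow_mul (sub_nonneg.2 ht.2), mul_one_div_cancel hN₀.ne', Real.rpow_one]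
  calc ENNReal.ofReal (1 - t) * m A ^ (1 / N)
      = ENNReal.ofReal (1 - t) * (m A)⁻¹⁻¹ ^ (1 / N) := by rw [inv_inv]
    _ ≤ ENNReal.ofReal (1 - t) * renyiIntegral N m (Γ 0) := by
        gcongr
        exact inv_rpow_le_renyiIntegral hN₀.le h₀
    _ ≤ renyiIntegral N m (Γ t) := le_self_add.trans (hsdc.add_le_renyiIntegral hΓ ht)
    _ ≤ m E ^ (1 / N) := renyiIntegral_le_rpow hN hE hΓE

variable [CompleteSpace X] [SecondCountableTopology X] [BorelSpace X]

/- Condition the plan on the event `G t ∈ E`: its endpoint laws have density at most `c / P A`, and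
its law at time `t` is concentrated on `E`, whence `P A / c ≤ m E`. -/
lemma map_le_smul [SigmaFinite m] (hsdc : StronglyDisplacementConvex (renyiEntropy N m))
    (hN : 1 ≤ N) {Ω : Type*} [MeasurableSpace Ω] {P : Measure Ω} [IsFiniteMeasure P]
    {G : ℝ → Ω → X} (hG : IsOptimalDynamicPlan P G) {c : ℝ≥0∞} (hc₀ : c ≠ 0) (hc : c ≠ ∞)
    (h₀ : P.map (G 0) ≤ c • m) (h₁ : P.map (G 1) ≤ c • m) {t : ℝ} (ht : t ∈ Icc (0 : ℝ) 1) :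
    P.map (G t) ≤ c • m := by
  refine Measure.le_iff.2 fun E hE => ?_
  rw [Measure.map_apply (hG.measurable t) hE, Measure.smul_apply, smul_eq_mul]
  set A := G t ⁻¹' E
  have hA : MeasurableSet A := hG.measurable t hE
  rcases eq_or_ne (P A) 0 with hPA | hPA
  · exact hPA ▸ zero_le
  have := cond_isProbabilityMeasure hPA
  have hend (s : ℝ) (hs : P.map (G s) ≤ c • m) : P[|A].map (G s) ≤ ((P A)⁻¹ * c) • m := by
    rw [ProbabilityTheory.cond, Measure.map_smul, ← smul_smul]
    gcongr
    exact (Measure.map_mono Measure.restrict_le_self (hG.measurable s)).trans hs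
  have hmeas := hsdc.inv_le_measure hN (hG.cond hA hPA).isW2Geodesic (hend 0 h₀) (hend 1 h₁) ht hE
    (by
      rw [Measure.map_apply (hG.measurable t) hE.compl, preimage_compl]
      exact mem_ae_iff.1 (ae_cond_mem hA))
  rw [ENNReal.mul_inv (.inr hc) (.inr hc₀), inv_inv, ← div_eq_mul_inv,
    ENNReal.div_le_iff hc₀ hc] at hmeas
  exact hmeas.trans_eq (mul_comm _ _)

lemma measure_le_of_subset_ball [SigmaFinite m]
    (hsdc : StronglyDisplacementConvex (renyiEntropy N m)) (hN : 1 ≤ N) (hgeo : IsGeodesicSpace X)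
    {x : X} {r c : ℝ} (hc : 1 ≤ c) {A : Set X} (hA : MeasurableSet A)
    (hAball : A ⊆ ball x (c * r)) (hAfin : m A ≠ ∞) :
    m A ≤ ENNReal.ofReal (c ^ N) * m (ball x r) := by
  rcases eq_or_ne (m A) 0 with hA₀ | hA₀
  · exact hA₀ ▸ zero_le
  have hc₀ : 0 < c := by positivity
  have := cond_isProbabilityMeasure_of_finite hA₀ hAfin
  have hμ : ∀ᵐ y ∂m[|A], y ∈ ball x (c * r) := (ae_cond_mem hA).mono fun y hy => hAball hy
  obtain ⟨y, hy⟩ := nonempty_of_measure_ne_zero hA₀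
  have hδ : ∀ᵐ y ∂Measure.dirac x, y = x := by rw [ae_dirac_eq]; rfl
  obtain ⟨P, G, hP, hG, hG₀, hG₁⟩ := hgeo.exists_isOptimalDynamicPlan m[|A] (.dirac x)
    (W2sq_ne_top_of_ae_mem_ball hμ (hδ.mono fun z hz =>
      hz ▸ mem_ball_self (pos_of_mem_ball (hAball hy))))
  have ht : 1 - c⁻¹ ∈ Icc (0 : ℝ) 1 :=
    ⟨sub_nonneg.2 (inv_le_one_of_one_le₀ hc), sub_le_self _ (inv_nonneg.2 hc₀.le)⟩
  have hcontract : ∀ᵐ ω ∂P, G (1 - c⁻¹) ω ∈ ball x r := by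
    rw [← hG₀] at hμ
    rw [← hG₁] at hδ
    filter_upwards [hG.isGeodesicMap, ae_of_ae_map (hG.measurable 0).aemeasurable hμ,
      ae_of_ae_map (hG.measurable 1).aemeasurable hδ] with ω hω h₀ h₁
    have hdist := hω _ ht 1 (by simp)
    dsimp only at hdist
    rw [h₁, sub_sub_cancel_left, abs_neg, abs_of_pos (inv_pos.2 hc₀)] at hdist
    rwa [mem_ball, hdist, inv_mul_lt_iff₀ hc₀]
  have hcompare := hsdc.ofReal_rpow_mul_measure_le hN hG.isW2Geodesic
    (hG₀ ▸ cond_le_inv_smul m A) ht measurableSet_ball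
    (mem_ae_iff.1 ((mem_ae_map_iff (hG.measurable _).aemeasurable measurableSet_ball).2 hcontract))
  rwa [sub_sub_cancel, Real.inv_rpow hc₀.le, ENNReal.ofReal_inv_of_pos (by positivity),
    ENNReal.inv_mul_le_iff (by positivity) ENNReal.ofReal_ne_top] at hcompare

lemma measure_ball_mul_le [SigmaFinite m]
    (hsdc : StronglyDisplacementConvex (renyiEntropy N m)) (hN : 1 ≤ N) (hgeo : IsGeodesicSpace X)
    (x : X) (r : ℝ) {c : ℝ} (hc : 1 ≤ c) :
    m (ball x (c * r)) ≤ ENNReal.ofReal (c ^ N) * m (ball x r) := by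
  refine le_of_forall_lt fun a ha => ?_
  obtain ⟨A, hA, hAball, haA, hAfin⟩ :=
    Measure.exists_subset_measure_lt_top measurableSet_ball ha
  exact haA.trans_le (hsdc.measure_le_of_subset_ball hN hgeo hc hA hAball hAfin.ne)

lemma measure_ball_lt_top [IsLocallyFiniteMeasure m]
    (hsdc : StronglyDisplacementConvex (renyiEntropy N m)) (hN : 1 ≤ N) (hgeo : IsGeodesicSpace X)
    (x : X) (r : ℝ) : m (ball x r) < ∞ := by
  obtain ⟨s, hs, hsfin⟩ := m.finiteAt_nhds x
  obtain ⟨ε, hε, hεs⟩ := Metric.mem_nhds_iff.1 hs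
  calc m (ball x r) ≤ m (ball x (max 1 (r / ε) * ε)) := by
        gcongr
        exact (div_le_iff₀ hε).1 (le_max_right _ _)
    _ ≤ ENNReal.ofReal (max 1 (r / ε) ^ N) * m (ball x ε) :=
        hsdc.measure_ball_mul_le hN hgeo x ε (le_max_left _ _)
    _ < ∞ := ENNReal.mul_lt_top ENNReal.ofReal_lt_top ((measure_mono hεs).trans_lt hsfin)

end StronglyDisplacementConvex

end Renyi

section UpperGradient

variable {X : Type*} [MetricSpace X]

lemma IsGeodesicMap.mem_ball_two_mul {γ : ℝ → X} (hγ : IsGeodesicMap γ) {x : X} {r : ℝ}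
    (h₀ : γ 0 ∈ ball x r) (h₁ : γ 1 ∈ ball x r) {t : ℝ} (ht : t ∈ Icc (0 : ℝ) 1) :
    γ t ∈ ball x (2 * r) := by
  rw [mem_ball] at *
  have hdist₀ := hγ t ht 0 (by simp)
  have hdist₁ := hγ t ht 1 (by simp)
  rw [sub_zero, abs_of_nonneg ht.1] at hdist₀
  rw [abs_of_nonpos (sub_nonpos.2 ht.2)] at hdist₁
  nlinarith [ht.1, ht.2, dist_triangle (γ t) (γ 0) x, dist_triangle (γ t) (γ 1) x,
    dist_triangle_right (γ 0) (γ 1) x]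

variable [MeasurableSpace X] {u : X → ℝ} {g : X → ℝ≥0∞}

namespace IsUpperGradient

lemma neg (hg : IsUpperGradient u g) : IsUpperGradient (-u) g :=
  ⟨hg.1, fun γ l hγ => by
    simpa only [Pi.neg_apply, neg_sub_neg, abs_sub_comm] using hg.2 γ l hγ⟩

lemma ofReal_sub_le (hg : IsUpperGradient u g) {γ : ℝ → X} (hγ : IsGeodesicMap γ) :
    ENNReal.ofReal (u (γ 0) - u (γ 1)) ≤
      edist (γ 0) (γ 1) * ∫⁻ t in Icc (0 : ℝ) 1, g (γ t) :=
  calc ENNReal.ofReal (u (γ 0) - u (γ 1)) ≤ ENNReal.ofReal |u (γ 1) - u (γ 0)| := by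
        rw [abs_sub_comm]
        exact ENNReal.ofReal_le_ofReal (le_abs_self _)
    _ ≤ edist (γ 0) (γ 1) * ∫⁻ t in Icc (0 : ℝ) 1, g (γ t) := by
        rw [edist_nndist]
        exact hg.2 γ _ hγ.lipschitzOnWith

end IsUpperGradient

lemma lintegral_lintegral_comp_le {Y Ω T : Type*} [MeasurableSpace Y] [MeasurableSpace Ω]
    [MeasurableSpace T] {m : Measure Y} {P : Measure Ω} [SFinite P] {τ : Measure T} [SFinite τ]
    {G : T → Ω → Y} (hG : Measurable (Function.uncurry G)) {c : ℝ≥0∞}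
    (hP : ∀ᵐ t ∂τ, P.map (G t) ≤ c • m) {S : Set Y} (hS : MeasurableSet S)
    (hGS : ∀ᵐ t ∂τ, ∀ᵐ ω ∂P, G t ω ∈ S) {f : Y → ℝ≥0∞} (hf : Measurable f) :
    ∫⁻ ω, (∫⁻ t, f (G t ω) ∂τ) ∂P ≤ τ univ * (c * ∫⁻ y in S, f y ∂m) :=
  calc ∫⁻ ω, (∫⁻ t, f (G t ω) ∂τ) ∂P
      = ∫⁻ t, (∫⁻ ω, f (G t ω) ∂P) ∂τ :=
        lintegral_lintegral_swap (f := fun ω t => f (G t ω))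
          (hf.comp (hG.comp measurable_swap)).aemeasurable
    _ ≤ ∫⁻ _, (c * ∫⁻ y in S, f y ∂m) ∂τ := by
        refine lintegral_mono_ae ?_
        filter_upwards [hP, hGS] with t hPt hGSt
        have hGt : Measurable (G t) := hG.of_uncurry_left
        rw [← lintegral_map hf hGt, ← Measure.restrict_eq_self_of_ae_mem
          ((mem_ae_map_iff hGt.aemeasurable hS).2 hGSt), ← smul_eq_mul, ← lintegral_smul_measure,
          ← Measure.restrict_smul]
        exact lintegral_mono' (Measure.restrict_mono_measure hPt S) le_rfl
    _ = τ univ * (c * ∫⁻ y in S, f y ∂m) := by rw [lintegral_const, mul_comm]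

variable [BorelSpace X] {m : Measure X} {x : X} {r : ℝ}

lemma IsOptimalDynamicPlan.lintegral_ofReal_sub_le {Ω : Type*} [MeasurableSpace Ω]
    {P : Measure Ω} [SFinite P] {G : ℝ → Ω → X} (hG : IsOptimalDynamicPlan P G)
    (hg : IsUpperGradient u g) (h₀ : ∀ᵐ ω ∂P, G 0 ω ∈ ball x r)
    (h₁ : ∀ᵐ ω ∂P, G 1 ω ∈ ball x r) {c : ℝ≥0∞}
    (hP : ∀ t ∈ Icc (0 : ℝ) 1, P.map (G t) ≤ c • m) :
    ∫⁻ ω, ENNReal.ofReal (u (G 0 ω) - u (G 1 ω)) ∂P ≤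
      ENNReal.ofReal (2 * r) * (c * ∫⁻ y in ball x (2 * r), g y ∂m) := by
  calc ∫⁻ ω, ENNReal.ofReal (u (G 0 ω) - u (G 1 ω)) ∂P
      ≤ ∫⁻ ω, ENNReal.ofReal (2 * r) * (∫⁻ t in Icc (0 : ℝ) 1, g (G t ω)) ∂P := by
        refine lintegral_mono_ae ?_
        filter_upwards [hG.isGeodesicMap, h₀, h₁] with ω hω h₀ h₁
        refine (hg.ofReal_sub_le hω).trans ?_
        gcongr
        rw [edist_dist]
        refine ENNReal.ofReal_le_ofReal ?_
        linarith [dist_triangle_right (G 0 ω) (G 1 ω) x, mem_ball.1 h₀, mem_ball.1 h₁]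
    _ = ENNReal.ofReal (2 * r) * ∫⁻ ω, (∫⁻ t in Icc (0 : ℝ) 1, g (G t ω)) ∂P :=
        lintegral_const_mul' _ _ ENNReal.ofReal_ne_top
    _ ≤ ENNReal.ofReal (2 * r) * (c * ∫⁻ y in ball x (2 * r), g y ∂m) := by
        gcongr
        refine (lintegral_lintegral_comp_le (S := ball x (2 * r)) hG.measurable_uncurry
          (ae_restrict_of_forall_mem measurableSet_Icc hP) measurableSet_ball
          (ae_restrict_of_forall_mem measurableSet_Icc fun t ht => ?_) hg.1).trans_eq (by simp)
        filter_upwards [hG.isGeodesicMap, h₀, h₁] with ω hω h₀ h₁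
        exact hω.mem_ball_two_mul h₀ h₁ ht

variable [CompleteSpace X] [SecondCountableTopology X] [SigmaFinite m] {N : ℝ}

namespace StronglyDisplacementConvex

lemma exists_isOptimalDynamicPlan_cond (hsdc : StronglyDisplacementConvex (renyiEntropy N m))
    (hN : 1 ≤ N) (hgeo : IsGeodesicSpace X) {A A' : Set X} (hA : MeasurableSet A)
    (hA' : MeasurableSet A') (hAball : A ⊆ ball x r) (hAball' : A' ⊆ ball x r) (hA₀ : m A ≠ 0)
    (hAA' : m A ≤ m A') (hAfin' : m A' ≠ ∞) :
    ∃ (P : Measure (X × X)) (G : ℝ → X × X → X), IsProbabilityMeasure P ∧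
      IsOptimalDynamicPlan P G ∧ P.map (G 0) = m[|A] ∧ P.map (G 1) = m[|A'] ∧
      ∀ t ∈ Icc (0 : ℝ) 1, P.map (G t) ≤ (m A)⁻¹ • m := by
  have hAfin : m A ≠ ∞ := ne_top_of_le_ne_top hAfin' hAA'
  have := cond_isProbabilityMeasure_of_finite hA₀ hAfin
  have := cond_isProbabilityMeasure_of_finite (hA₀.bot_lt.trans_le hAA').ne' hAfin'
  obtain ⟨P, G, hP, hG, hG₀, hG₁⟩ := hgeo.exists_isOptimalDynamicPlan m[|A] m[|A']
    (W2sq_ne_top_of_ae_mem_ball ((ae_cond_mem hA).mono hAball) ((ae_cond_mem hA').mono hAball'))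
  refine ⟨P, G, hP, hG, hG₀, hG₁, fun t ht => hsdc.map_le_smul hN hG (ENNReal.inv_ne_zero.2 hAfin)
    (ENNReal.inv_ne_top.2 hA₀) (hG₀ ▸ cond_le_inv_smul m A) ?_ ht⟩
  rw [hG₁]
  exact (cond_le_inv_smul m A').trans (by gcongr)

/- Transport the uniform distribution of `{a < u}` to that of `{u ≤ a}`: the second set is at least
as large as the first, so all the intermediate laws have density at most `(m {a < u})⁻¹`. -/
lemma lintegral_ofReal_sub_le (hsdc : StronglyDisplacementConvex (renyiEntropy N m)) (hN : 1 ≤ N)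
    (hgeo : IsGeodesicSpace X) (hu : Measurable u) (hg : IsUpperGradient u g)
    (hr : m (ball x r) ≠ ∞) {a : ℝ}
    (ha : m (u ⁻¹' Ioi a ∩ ball x r) ≤ m (u ⁻¹' Iic a ∩ ball x r)) :
    ∫⁻ y in ball x r, ENNReal.ofReal (u y - a) ∂m ≤
      ENNReal.ofReal (2 * r) * ∫⁻ y in ball x (2 * r), g y ∂m := by
  set A := u ⁻¹' Ioi a ∩ ball x r
  have hrestrict : ∫⁻ y in ball x r, ENNReal.ofReal (u y - a) ∂m =
      ∫⁻ y in A, ENNReal.ofReal (u y - a) ∂m := by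
    rw [← Measure.restrict_restrict (hu measurableSet_Ioi),
      ← lintegral_indicator (hu measurableSet_Ioi)]
    refine lintegral_congr fun y => Eq.symm ?_
    rw [indicator_apply_eq_self]
    exact fun hy => ENNReal.ofReal_of_nonpos (sub_nonpos.2 (not_lt.1 hy))
  rw [hrestrict]
  rcases eq_or_ne (m A) 0 with hA₀ | hA₀
  · rw [setLIntegral_measure_zero _ _ hA₀]
    exact zero_le
  have hAfin : m A ≠ ∞ := measure_ne_top_of_subset inter_subset_right hr
  have hA : MeasurableSet A := (hu measurableSet_Ioi).inter measurableSet_ball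
  have hA' : MeasurableSet (u ⁻¹' Iic a ∩ ball x r) :=
    (hu measurableSet_Iic).inter measurableSet_ball
  obtain ⟨P, G, hP, hG, hG₀, hG₁, hmap⟩ := hsdc.exists_isOptimalDynamicPlan_cond hN hgeo hA hA'
    inter_subset_right inter_subset_right hA₀ ha (measure_ne_top_of_subset inter_subset_right hr)
  have h₀ : ∀ᵐ ω ∂P, G 0 ω ∈ A :=
    ae_of_ae_map (hG.measurable 0).aemeasurable (hG₀ ▸ ae_cond_mem hA)
  have h₁ : ∀ᵐ ω ∂P, G 1 ω ∈ u ⁻¹' Iic a ∩ ball x r :=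
    ae_of_ae_map (hG.measurable 1).aemeasurable (hG₁ ▸ ae_cond_mem hA')
  calc ∫⁻ y in A, ENNReal.ofReal (u y - a) ∂m
      = m A * ∫⁻ ω, ENNReal.ofReal (u (G 0 ω) - a) ∂P := by
        rw [← lintegral_map (hu.sub_const a).ennreal_ofReal (hG.measurable 0), hG₀,
          ProbabilityTheory.cond, lintegral_smul_measure, smul_eq_mul,
          ENNReal.mul_inv_cancel_left hA₀ hAfin]
    _ ≤ m A * ∫⁻ ω, ENNReal.ofReal (u (G 0 ω) - u (G 1 ω)) ∂P := by
        gcongr m A * ?_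
        exact lintegral_mono_ae (h₁.mono fun ω hω => by gcongr; exact hω.1)
    _ ≤ m A * (ENNReal.ofReal (2 * r) * ((m A)⁻¹ * ∫⁻ y in ball x (2 * r), g y ∂m)) := by
        gcongr
        exact hG.lintegral_ofReal_sub_le hg (h₀.mono fun _ h => h.2) (h₁.mono fun _ h => h.2) hmap
    _ = ENNReal.ofReal (2 * r) * ∫⁻ y in ball x (2 * r), g y ∂m := by
        rw [mul_left_comm, ENNReal.mul_inv_cancel_left hA₀ hAfin]

end StronglyDisplacementConvex

end UpperGradient

section Poincare

section Oscillation

variable {Y : Type*} [MeasurableSpace Y] {μ : Measure Y} {f : Y → ℝ}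

lemma exists_measure_Ioi_le_measure_Iic (μ : Measure ℝ) [IsFiniteMeasure μ] :
    ∃ a, μ (Ioi a) ≤ μ (Iic a) := by
  by_contra! h
  have hIic := tendsto_measure_Iic_atTop μ
  have hIoi : Tendsto (fun a => μ (Ioi a)) atTop (𝓝 0) := by
    have hsub := ENNReal.Tendsto.sub (tendsto_const_nhds (x := μ univ)) hIic
      (.inl (measure_ne_top μ univ))
    rw [tsub_self] at hsub
    exact hsub.congr fun a => by
      rw [← measure_compl measurableSet_Iic (measure_ne_top μ _), compl_Iic]
  have huniv : μ univ ≤ 0 := le_of_tendsto_of_tendsto' hIic hIoi fun a => (h a).le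
  exact (h 0).not_ge ((measure_mono (subset_univ _)).trans (huniv.trans zero_le))

lemma integrable_of_lintegral_ofReal_sub_ne_top [IsFiniteMeasure μ]
    (hf : Measurable f) {a b : ℝ}
    (ha : ∫⁻ y, ENNReal.ofReal (f y - a) ∂μ ≠ ∞) (hb : ∫⁻ y, ENNReal.ofReal (-f y - b) ∂μ ≠ ∞) :
    Integrable f μ := by
  have hbound (y : Y) : ‖f y‖ₑ ≤
      ENNReal.ofReal (f y - a) + ENNReal.ofReal (-f y - b) + ENNReal.ofReal (|a| + |b|) := by
    rw [Real.enorm_eq_ofReal_abs, abs_eq_max_neg, ENNReal.ofReal_max]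
    refine max_le ?_ ?_
    · calc ENNReal.ofReal (f y) ≤ ENNReal.ofReal ((f y - a) + (|a| + |b|)) := by
            gcongr
            linarith [le_abs_self a, abs_nonneg b]
        _ ≤ _ := ENNReal.ofReal_add_le.trans (by gcongr; exact le_self_add)
    · calc ENNReal.ofReal (-f y) ≤ ENNReal.ofReal ((-f y - b) + (|a| + |b|)) := by
            gcongr
            linarith [le_abs_self b, abs_nonneg a]
        _ ≤ _ := ENNReal.ofReal_add_le.trans (by gcongr; exact le_add_self)
  refine ⟨hf.aestronglyMeasurable, (lintegral_mono hbound).trans_lt ?_⟩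
  rw [lintegral_add_right _ measurable_const,
    lintegral_add_left (hf.sub_const a).ennreal_ofReal, lintegral_const]
  finiteness

lemma lintegral_ofReal_abs_eq_two_mul (hf : Integrable f μ) (hf₀ : ∫ y, f y ∂μ = 0) :
    ∫⁻ y, ENNReal.ofReal |f y| ∂μ = 2 * ∫⁻ y, ENNReal.ofReal (f y) ∂μ := by
  have hfin {f : Y → ℝ} (hf : Integrable f μ) : ∫⁻ y, ENNReal.ofReal (f y) ∂μ ≠ ∞ :=
    ne_top_of_le_ne_top hf.2.ne (lintegral_mono fun y => Real.ofReal_le_enorm _)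
  have hparts : ∫⁻ y, ENNReal.ofReal (f y) ∂μ = ∫⁻ y, ENNReal.ofReal (-f y) ∂μ := by
    rw [integral_eq_lintegral_pos_part_sub_lintegral_neg_part hf, sub_eq_zero] at hf₀
    exact (ENNReal.toReal_eq_toReal_iff' (hfin hf) (hfin hf.neg)).1 hf₀
  calc ∫⁻ y, ENNReal.ofReal |f y| ∂μ
      = ∫⁻ y, (ENNReal.ofReal (f y) + ENNReal.ofReal (-f y)) ∂μ := by
        refine lintegral_congr fun y => ?_
        rcases le_total 0 (f y) with h | h
        · rw [abs_of_nonneg h, ENNReal.ofReal_of_nonpos (neg_nonpos.2 h), add_zero]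
        · rw [abs_of_nonpos h, ENNReal.ofReal_of_nonpos h, zero_add]
    _ = 2 * ∫⁻ y, ENNReal.ofReal (f y) ∂μ := by
        rw [lintegral_add_left' hf.aemeasurable.ennreal_ofReal, ← hparts, two_mul]

end Oscillation

namespace StronglyDisplacementConvex

variable {X : Type*} [MetricSpace X] [CompleteSpace X] [SecondCountableTopology X]
  [MeasurableSpace X] [BorelSpace X] {m : Measure X} [SigmaFinite m] {N : ℝ} {u : X → ℝ}
  {g : X → ℝ≥0∞} {x : X} {r : ℝ}

lemma exists_lintegral_ofReal_sub_le (hsdc : StronglyDisplacementConvex (renyiEntropy N m))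
    (hN : 1 ≤ N) (hgeo : IsGeodesicSpace X) (hu : Measurable u) (hg : IsUpperGradient u g)
    (hr : m (ball x r) ≠ ∞) :
    ∃ a, ∫⁻ y in ball x r, ENNReal.ofReal (u y - a) ∂m ≤
      ENNReal.ofReal (2 * r) * ∫⁻ y in ball x (2 * r), g y ∂m := by
  have : IsFiniteMeasure (m.restrict (ball x r)) := isFiniteMeasure_restrict.2 hr
  obtain ⟨a, ha⟩ := exists_measure_Ioi_le_measure_Iic ((m.restrict (ball x r)).map u)
  rw [Measure.map_apply hu measurableSet_Ioi, Measure.map_apply hu measurableSet_Iic,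
    Measure.restrict_apply (hu measurableSet_Ioi), Measure.restrict_apply (hu measurableSet_Iic)]
    at ha
  exact ⟨a, hsdc.lintegral_ofReal_sub_le hN hgeo hu hg hr ha⟩

lemma integrableOn_ball (hsdc : StronglyDisplacementConvex (renyiEntropy N m))
    (hN : 1 ≤ N) (hgeo : IsGeodesicSpace X) (hu : Measurable u) (hg : IsUpperGradient u g)
    (hr : m (ball x r) ≠ ∞) (hgfin : ∫⁻ y in ball x (2 * r), g y ∂m ≠ ∞) :
    IntegrableOn u (ball x r) m := by
  have : IsFiniteMeasure (m.restrict (ball x r)) := isFiniteMeasure_restrict.2 hr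
  have hfin := ENNReal.mul_ne_top (ENNReal.ofReal_ne_top (r := 2 * r)) hgfin
  obtain ⟨a, ha⟩ := hsdc.exists_lintegral_ofReal_sub_le hN hgeo hu hg hr
  obtain ⟨b, hb⟩ := hsdc.exists_lintegral_ofReal_sub_le hN hgeo hu.neg hg.neg hr
  exact integrable_of_lintegral_ofReal_sub_ne_top hu (ne_top_of_le_ne_top hfin ha)
    (ne_top_of_le_ne_top hfin hb)

/- The mean `a` need not be a median, but the positive and the negative part of `u - a` have the
same integral, and one of them is controlled by the one-sided estimate. -/
lemma lintegral_abs_sub_average_le (hsdc : StronglyDisplacementConvex (renyiEntropy N m))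
    (hN : 1 ≤ N) (hgeo : IsGeodesicSpace X) (hu : Measurable u) (hg : IsUpperGradient u g)
    (hr : m (ball x r) ≠ ∞) (hgfin : ∫⁻ y in ball x (2 * r), g y ∂m ≠ ∞) :
    ∫⁻ y in ball x r, ENNReal.ofReal |u y - ⨍ z in ball x r, u z ∂m| ∂m ≤
      2 * (ENNReal.ofReal (2 * r) * ∫⁻ y in ball x (2 * r), g y ∂m) := by
  have : IsFiniteMeasure (m.restrict (ball x r)) := isFiniteMeasure_restrict.2 hr
  set a := ⨍ z in ball x r, u z ∂m
  have hint : IntegrableOn u (ball x r) m := hsdc.integrableOn_ball hN hgeo hu hg hr hgfin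
  rcases le_total (m (u ⁻¹' Ioi a ∩ ball x r)) (m (u ⁻¹' Iic a ∩ ball x r)) with ha | ha
  · rw [lintegral_ofReal_abs_eq_two_mul (f := fun y => u y - a)
      (hint.sub (integrable_const a)) (integral_sub_average _ u)]
    gcongr
    exact hsdc.lintegral_ofReal_sub_le hN hgeo hu hg hr ha
  · have hneg : m ((-u) ⁻¹' Ioi (-a) ∩ ball x r) ≤ m ((-u) ⁻¹' Iic (-a) ∩ ball x r) := by
      calc m ((-u) ⁻¹' Ioi (-a) ∩ ball x r) ≤ m (u ⁻¹' Iic a ∩ ball x r) :=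
            measure_mono (inter_subset_inter_left _ fun y (hy : -a < -u y) =>
              show u y ≤ a from (neg_lt_neg_iff.1 hy).le)
        _ ≤ m (u ⁻¹' Ioi a ∩ ball x r) := ha
        _ ≤ m ((-u) ⁻¹' Iic (-a) ∩ ball x r) :=
            measure_mono (inter_subset_inter_left _ fun y (hy : a < u y) =>
              show -u y ≤ -a from neg_le_neg hy.le)
    simp_rw [abs_sub_comm _ a]
    rw [lintegral_ofReal_abs_eq_two_mul (f := fun y => a - u y)
      ((integrable_const a).sub hint) (integral_average_sub hint)]
    gcongr
    simpa only [Pi.neg_apply, neg_sub_neg] using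
      hsdc.lintegral_ofReal_sub_le hN hgeo hu.neg hg.neg hr hneg

end StronglyDisplacementConvex

lemma ofReal_two_rpow_add_two_mul {r : ℝ} (hr : 0 ≤ r) (p : ℝ) :
    ENNReal.ofReal (2 ^ (p + 2) * r) =
      2 * ENNReal.ofReal (2 * r) * ENNReal.ofReal (2 ^ p) := by
  rw [← ENNReal.ofReal_ofNat 2, ← ENNReal.ofReal_mul zero_le_two,
    ← ENNReal.ofReal_mul (by positivity), Real.rpow_add two_pos, Real.rpow_two]
  ring_nf

end Poincare

theorem renyi_sdc_weak_local_poincare_average_general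
    {X : Type*} [MetricSpace X] [CompleteSpace X] [MeasurableSpace X] [BorelSpace X]
    (m : Measure X) (hgeo : IsGeodesicSpace X)
    (hsupp : ∀ x : X, ∀ ε > 0, 0 < m (Metric.ball x ε))
    [IsLocallyFiniteMeasure m]
    {N : ℝ} (hN : 1 ≤ N) (hsdc : StronglyDisplacementConvex (renyiEntropy N m))
    (u : X → ℝ) (hu : Measurable u) (g : X → ℝ≥0∞) (hg : IsUpperGradient u g)
    (x : X) (r : ℝ) (hr : 0 < r) :
    (⨍⁻ y in Metric.ball x r,
        ENNReal.ofReal |u y - ⨍ z in Metric.ball x r, u z ∂m| ∂m)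
      ≤ ENNReal.ofReal ((2:ℝ) ^ (N + 2) * r) *
          ⨍⁻ y in Metric.ball x (2 * r), g y ∂m := by
  have := hgeo.secondCountableTopology hsupp
  have hfin := (hsdc.measure_ball_lt_top hN hgeo x r).ne
  have hfin₂ := (hsdc.measure_ball_lt_top hN hgeo x (2 * r)).ne
  have hpos₂ := (hsupp x (2 * r) (by positivity)).ne'
  rw [setLAverage_eq, setLAverage_eq]
  set I := ∫⁻ y in ball x (2 * r), g y ∂m
  rcases eq_or_ne I ∞ with hgI | hgI
  · rw [hgI, ENNReal.top_div_of_ne_top hfin₂, ENNReal.mul_top (by positivity)]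
    exact le_top
  refine ENNReal.div_le_of_le_mul ?_
  calc _ ≤ 2 * (ENNReal.ofReal (2 * r) * I) :=
        hsdc.lintegral_abs_sub_average_le hN hgeo hu hg hfin hgI
    _ = 2 * ENNReal.ofReal (2 * r) * (m (ball x (2 * r)) * (I / m (ball x (2 * r)))) := by
        rw [ENNReal.mul_div_cancel hpos₂ hfin₂, mul_assoc]
    _ ≤ 2 * ENNReal.ofReal (2 * r) *
          (ENNReal.ofReal (2 ^ N) * m (ball x r) * (I / m (ball x (2 * r)))) := by
        gcongr
        exact hsdc.measure_ball_mul_le hN hgeo x r one_le_two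
    _ = _ := by
        rw [ofReal_two_rpow_add_two_mul hr.le]
        ring

/-- Corollary 4: strong displacement convexity of `E_N` implies the weak local Poincaré
inequality in average form. -/
theorem renyi_sdc_weak_local_poincare_average
    {X : Type*} [MetricSpace X] [CompleteSpace X] [MeasurableSpace X] [BorelSpace X]
    (m : Measure X) (hgeo : IsGeodesicSpace X)
    (hsupp : ∀ x : X, ∀ ε > 0, 0 < m (Metric.ball x ε))
    [IsLocallyFiniteMeasure m]
    {N : ℝ} (hN : 1 ≤ N) (hsdc : StronglyDisplacementConvex (renyiEntropy N m))
    (u : X → ℝ) (hu : Continuous u) (g : X → ℝ≥0∞) (hg : IsUpperGradient u g)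
    (x : X) (r : ℝ) (hr : 0 < r) :
    (⨍⁻ y in Metric.ball x r,
        ENNReal.ofReal |u y - ⨍ z in Metric.ball x r, u z ∂m| ∂m)
      ≤ ENNReal.ofReal ((2:ℝ) ^ (N + 2) * r) *
          ⨍⁻ y in Metric.ball x (2 * r), g y ∂m :=
  renyi_sdc_weak_local_poincare_average_general m hgeo hsupp hN hsdc u hu.measurable g hg x r hr
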